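/- Let k be an algebraically closed field of characteristic zero, s ≤ n, and f_1,...,f_s ∈ k[x_1,...,x_n] polynomials defining a proper ideal of Krull dimension n − s. Let d = max deg f_i and let δ be the geometric degree of the system f_1,...,f_s. Then for any g ∈ (f_1,...,f_s) there exist a_1,...,a_s ∈ k[x_1,...,x_n] with g = a_1 f_1 + ... + a_s f_s and deg(a_i f_i) ≤ deg g + s²·(d + 3n)·δ for all i. -/

import Mathlib

open MvPolynomial

/-- Integer-valued binomial coefficient `C(a, b)`, zero when `a < 0` or `a < b`. -/
def ichoose (a : ℤ) (b : ℕ) : ℤ := if a < 0 then 0 else (a.toNat).choose b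

/-- The Hilbert function of a (homogeneous) ideal `I ⊆ k[x₀, …, xₙ]`:
`m ↦ dim_k (k[x₀, …, xₙ]/I)_m`. -/
noncomputable def hilbF (k : Type*) [Field k] {n : ℕ}
    (I : Ideal (MvPolynomial (Fin (n+1)) k)) (m : ℕ) : ℕ :=
  Module.finrank k ((homogeneousSubmodule (Fin (n+1)) k m).map
    (Ideal.Quotient.mkₐ k I).toLinearMap)

open scoped Classical in
/-- The Hilbert polynomial of `I` (the polynomial agreeing with the Hilbert
function for all large `m`; junk value `0` if none exists). -/
noncomputable def hilbP (k : Type*) [Field k] {n : ℕ}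
    (I : Ideal (MvPolynomial (Fin (n+1)) k)) : Polynomial ℚ :=
  if h : ∃ P : Polynomial ℚ, ∀ᶠ m : ℕ in Filter.atTop,
      (hilbF k I m : ℚ) = P.eval (m : ℚ) then h.choose else 0

/-- The (algebraic) degree of a homogeneous ideal `I` of projective dimension
`d ≥ 0`: `d! · (leading coefficient of its Hilbert polynomial)`. -/
noncomputable def idealDeg (k : Type*) [Field k] {n : ℕ}
    (I : Ideal (MvPolynomial (Fin (n+1)) k)) : ℕ :=
  ⌊((hilbP k I).natDegree.factorial : ℚ) * (hilbP k I).leadingCoeff⌋₊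

/-- The projective dimension of a homogeneous ideal `I` (of dimension `≥ 0`):
the degree of its Hilbert polynomial. -/
noncomputable def idealDim (k : Type*) [Field k] {n : ℕ}
    (I : Ideal (MvPolynomial (Fin (n+1)) k)) : ℕ :=
  (hilbP k I).natDegree

/-- A homogeneous ideal: one containing all homogeneous components of its elements. -/
def IsHomogeneousIdeal {k : Type*} [Field k] {n : ℕ}
    (I : Ideal (MvPolynomial (Fin (n+1)) k)) : Prop :=
  ∀ f ∈ I, ∀ m : ℕ, homogeneousComponent m f ∈ I

/-- `I` is unmixed of projective dimension `d`: every associated prime `P` of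
`k[x₀,…,xₙ]/I` satisfies `dim k[x₀,…,xₙ]/P = d + 1` (affine Krull dimension). -/
def IsUnmixed (k : Type*) [Field k] {n : ℕ}
    (I : Ideal (MvPolynomial (Fin (n+1)) k)) (d : ℕ) : Prop :=
  ∀ P ∈ associatedPrimes (MvPolynomial (Fin (n+1)) k)
      (MvPolynomial (Fin (n+1)) k ⧸ I),
    ringKrullDim (MvPolynomial (Fin (n+1)) k ⧸ P) = ((d + 1 : ℕ) : WithBot (WithTop ℕ))

/-- The homogenization of an affine ideal `J ⊆ k[x₁,…,xₙ]` in `k[x₀,…,xₙ]`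
(`x₀` is the homogenizing variable): the ideal generated by all homogeneous
polynomials whose dehomogenization (`x₀ ↦ 1`) lies in `J`. -/
noncomputable def homogIdeal (k : Type*) [Field k] {n : ℕ}
    (J : Ideal (MvPolynomial (Fin n) k)) : Ideal (MvPolynomial (Fin (n+1)) k) :=
  Ideal.span {F | (∃ m, F.IsHomogeneous m) ∧
    aeval (Fin.cases 1 X : Fin (n+1) → MvPolynomial (Fin n) k) F ∈ J}

/-!
Divide `g` successively by `q_t, …, q₁`. At each stage `J = (q₁, …, q_m)` is radical of dimension
`r = n - m`, the next `p = q_{m+1}` is a nonzerodivisor modulo `J`, and `g ≡ a p` modulo `J`; it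
suffices to replace `a` modulo `J` by a polynomial of small degree.

A linear Noether normalization `ℓ₁, …, ℓ_r` of `V(J)` has as its generic fibre a finite reduced
set of points, cut out by the square system `q = 0`, `ℓ = y`. The determinant of the Bezoutians of
this system reproduces functions on the fibre through residue sums `∑ F(ξ) / Jac(ξ)`. So modulo `J`
one may take `a` to have as coefficients sums of `g(ξ) ξ^e / (p(ξ) Jac(ξ))` over the fibre. These
lie in `k[y]`, because they are Galois invariant and, by the transformation law for residues,
integral; multiplying by the norm of `p Jac` bounds their degree linearly in the number of points.

That number is at most the degree of `V(J)`: the affine Hilbert function of `J` lies between shifts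
of the Hilbert function of `r`-space multiplied by it.
-/

section KrullDimension

variable {A B R : Type*} [CommRing A] [CommRing B] [CommRing R]

lemma ringKrullDim_le_of_isIntegral [Algebra B A] [Algebra.IsIntegral B A] :
    ringKrullDim A ≤ ringKrullDim B :=
  Order.krullDim_le_of_strictMono (PrimeSpectrum.comap (algebraMap B A)) fun p q hpq =>
    Ideal.IsIntegral.comap_lt_comap (R := B) (I := p.asIdeal) (J := q.asIdeal) hpq

lemma ringKrullDim_eq_of_isIntegral_of_injective [Algebra B A] [Algebra.IsIntegral B A]
    (hinj : Function.Injective (algebraMap B A)) : ringKrullDim A = ringKrullDim B := by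
  refine le_antisymm ringKrullDim_le_of_isIntegral (iSup_le fun l => ?_)
  have hker : Ideal.comap (algebraMap B A) ⊥ ≤ l.head.asIdeal := by
    rw [← RingHom.ker_eq_comap_bot, (RingHom.injective_iff_ker_eq_bot _).1 hinj]
    exact bot_le
  obtain ⟨Q, -, hQ, hQl⟩ := Ideal.exists_ideal_over_prime_of_isIntegral l.head.asIdeal ⊥ hker
  have : Q.LiesOver l.head.asIdeal := ⟨hQl.symm⟩
  obtain ⟨L, hL, -⟩ := Ideal.exists_ltSeries_of_hasGoingUp l Q
  exact hL ▸ Order.LTSeries.length_le_krullDim L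

lemma exists_notMem_forall_mem_of_mem_minimalPrimes [IsNoetherianRing R] {J p : Ideal R}
    (hp : p ∈ J.minimalPrimes) : ∃ f ∉ p, ∀ p' ∈ J.minimalPrimes, p' ≠ p → f ∈ p' := by
  classical
  have := hp.1.1
  have hfin : J.minimalPrimes.Finite := Ideal.finite_minimalPrimes_of_isNoetherianRing R J
  have hsep : ∀ p' ∈ J.minimalPrimes, p' ≠ p → ∃ g ∈ p', g ∉ p := fun p' hp' hne =>
    SetLike.not_le_iff_exists.1 fun hle => hne (le_antisymm hle (hp.2 hp'.1 hle))
  choose! g hg hgp using hsep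
  refine ⟨∏ p' ∈ hfin.toFinset.erase p, g p', ?_, fun p' hp' hne => ?_⟩
  · rw [Ideal.IsPrime.prod_mem_iff]
    rintro ⟨p', hp', hmem⟩
    obtain ⟨hne, hmin⟩ := Finset.mem_erase.1 hp'
    exact hgp p' (hfin.mem_toFinset.1 hmin) hne hmem
  · have hmem : p' ∈ hfin.toFinset.erase p :=
      Finset.mem_erase.2 ⟨hne, hfin.mem_toFinset.2 hp'⟩
    exact Ideal.mem_of_dvd _ (Finset.dvd_prod_of_mem g hmem) (hg p' hp' hne)

lemma exists_isMaximal_le_notMem [IsJacobsonRing R] {p : Ideal R} [p.IsPrime] {f : R}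
    (hf : f ∉ p) : ∃ M : Ideal R, M.IsMaximal ∧ p ≤ M ∧ f ∉ M := by
  by_contra! hM
  have hjac : p.jacobson = p := isJacobsonRing_iff_prime_eq.1 inferInstance p inferInstance
  rw [← hjac, Ideal.jacobson, Ideal.mem_sInf] at hf
  exact hf fun M hpM => hM M hpM.2 hpM.1

/-- Geometrically: a closed point of the component `V(p)` of `V(J)` on no other component. -/
lemma exists_isMaximal_forall_minimalPrime_le [IsNoetherianRing R] [IsJacobsonRing R]
    {J p : Ideal R} (hp : p ∈ J.minimalPrimes) :
    ∃ M : Ideal R, M.IsMaximal ∧ J ≤ M ∧ ∀ P : Ideal R, P.IsPrime → J ≤ P → P ≤ M → p ≤ P := by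
  have := hp.1.1
  obtain ⟨f, hfp, hf⟩ := exists_notMem_forall_mem_of_mem_minimalPrimes hp
  obtain ⟨M, hM, hpM, hfM⟩ := exists_isMaximal_le_notMem hfp
  refine ⟨M, hM, hp.1.2.trans hpM, fun P hP hJP hPM => ?_⟩
  obtain ⟨p', hp', hle⟩ := Ideal.exists_minimalPrimes_le hJP
  have hpp' : p' = p := by
    by_contra hne
    exact hfM (hPM (hle (hf p' hp' hne)))
  exact hpp' ▸ hle

lemma height_map_quotientMk_le_ringKrullDim_quotient {J p M : Ideal R} [M.IsPrime]
    (hJM : J ≤ M) (hp : ∀ P : Ideal R, P.IsPrime → J ≤ P → P ≤ M → p ≤ P) :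
    ((M.map (Ideal.Quotient.mk J)).height : WithBot ℕ∞) ≤ ringKrullDim (R ⧸ p) := by
  have hM' : (M.map (Ideal.Quotient.mk J)).IsPrime :=
    Ideal.isPrime_map_quotientMk_of_isPrime hJM
  have hcomap : (M.map (Ideal.Quotient.mk J)).comap (Ideal.Quotient.mk J) = M := by
    rw [Ideal.comap_map_of_surjective _ Ideal.Quotient.mk_surjective,
      ← RingHom.ker_eq_comap_bot, Ideal.mk_ker, sup_eq_left.2 hJM]
  have hker (P : Ideal (R ⧸ J)) : J ≤ P.comap (Ideal.Quotient.mk J) :=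
    Ideal.mk_ker.symm.trans_le (Ideal.ker_le_comap _)
  rw [PrimeSpectrum.height_eq_orderHeight ⟨_, hM'⟩, Order.height_eq_krullDim_Iic,
    ringKrullDim_quotient]
  refine Order.krullDim_le_of_strictMono
    (fun P => ⟨PrimeSpectrum.comap (Ideal.Quotient.mk J) P.1,
      hp _ (P.1.2.comap _) (hker _) ((Ideal.comap_mono P.2).trans hcomap.le)⟩) fun P Q hPQ => ?_
  exact (Ideal.orderEmbeddingOfSurjective _ Ideal.Quotient.mk_surjective).strictMono hPQ

end KrullDimension

section PolynomialRing

variable {k : Type*} [Field k] {n r : ℕ}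

lemma height_of_isMaximal_mvPolynomial :
    ∀ (n : ℕ) (M : Ideal (MvPolynomial (Fin n) k)) [M.IsMaximal], M.height = n
  | 0, M, hM => by
    have hfield : IsField (MvPolynomial (Fin 0) k) :=
      (isEmptyAlgEquiv k (Fin 0)).toMulEquiv.isField (Field.toIsField k)
    let := hfield.toField
    rw [(Ideal.eq_bot_or_top (K := MvPolynomial (Fin 0) k) M).resolve_right hM.ne_top]
    simp
  | n + 1, M, hM => by
    let e := (finSuccEquiv k n).toRingEquiv
    let P : Ideal (Polynomial (MvPolynomial (Fin n) k)) := M.map e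
    have hP : P.IsMaximal := Ideal.map_isMaximal_of_equiv e
    have hcomap : (P.comap Polynomial.C).IsMaximal :=
      Polynomial.isMaximal_comap_C_of_isJacobsonRing P
    have hlies : P.LiesOver (P.comap Polynomial.C) := ⟨rfl⟩
    rw [← e.height_map M, Polynomial.height_eq_height_add_one (P.comap Polynomial.C) P,
      height_of_isMaximal_mvPolynomial n]
    simp

lemma le_ringKrullDim_quotient_add_spanFinrank {J : Ideal (MvPolynomial (Fin n) k)}
    (hJ : J ≠ ⊤) :
    (n : WithBot ℕ∞) ≤ ringKrullDim (MvPolynomial (Fin n) k ⧸ J) + J.spanFinrank := by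
  obtain ⟨M, hM, hle⟩ := Ideal.exists_le_maximal _ hJ
  have hheight := height_le_ringKrullDim_quotient_add_spanFinrank hle
  rw [height_of_isMaximal_mvPolynomial n M] at hheight
  exact_mod_cast hheight

lemma le_ringKrullDim_quotient_minimalPrime_add_spanFinrank
    {J p : Ideal (MvPolynomial (Fin n) k)} (hp : p ∈ J.minimalPrimes) :
    (n : WithBot ℕ∞) ≤ ringKrullDim (MvPolynomial (Fin n) k ⧸ p) + J.spanFinrank := by
  obtain ⟨M, hM, hJM, hpM⟩ := exists_isMaximal_forall_minimalPrime_le hp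
  have hheight := Ideal.height_le_height_add_spanFinrank_of_le hJM
  rw [height_of_isMaximal_mvPolynomial n M] at hheight
  calc (n : WithBot ℕ∞)
      ≤ (M.map (Ideal.Quotient.mk J)).height + J.spanFinrank := mod_cast hheight
    _ ≤ _ := by
      gcongr
      exact height_map_quotientMk_le_ringKrullDim_quotient hJM hpM

lemma eq_bot_of_le_ringKrullDim_quotient {I : Ideal (MvPolynomial (Fin r) k)}
    (hI : (r : WithBot ℕ∞) ≤ ringKrullDim (MvPolynomial (Fin r) k ⧸ I)) : I = ⊥ := by
  rw [eq_bot_iff]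
  intro c hc
  by_contra hc0
  have hdim : (r : WithBot ℕ∞) + 1 ≤ r :=
    calc (r : WithBot ℕ∞) + 1
        ≤ ringKrullDim (MvPolynomial (Fin r) k ⧸ Ideal.span {c}) + 1 := by
          gcongr
          exact hI.trans (ringKrullDim_le_of_surjective
            (Ideal.Quotient.factor ((Ideal.span_singleton_le_iff_mem I).2 hc))
            (Ideal.Quotient.factor_surjective _))
      _ ≤ ringKrullDim (MvPolynomial (Fin r) k) :=
          ringKrullDim_quotient_succ_le_of_nonZeroDivisor (mem_nonZeroDivisors_of_ne_zero hc0)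
      _ = r := by simp
  exact absurd (by exact_mod_cast hdim : r + 1 ≤ r) (by omega)

/-- This is the unmixedness of complete intersections, read off a Noether normalization. -/
lemma comap_minimalPrime_eq_bot_of_isIntegral {J p : Ideal (MvPolynomial (Fin n) k)}
    (hJr : J.spanFinrank + r ≤ n) (φ : MvPolynomial (Fin r) k →+* MvPolynomial (Fin n) k)
    (hφ : ((Ideal.Quotient.mk J).comp φ).IsIntegral) (hp : p ∈ J.minimalPrimes) :
    p.comap φ = ⊥ := by
  refine eq_bot_of_le_ringKrullDim_quotient ?_
  let := (Ideal.quotientMap p φ le_rfl).toAlgebra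
  have hint : ((Ideal.Quotient.mk p).comp φ).IsIntegral := by
    rw [← Ideal.Quotient.factor_comp_mk hp.1.2, RingHom.comp_assoc]
    exact hφ.trans _ _ (RingHom.isIntegral_of_surjective _ (Ideal.Quotient.factor_surjective _))
  have : Algebra.IsIntegral (MvPolynomial (Fin r) k ⧸ p.comap φ) (MvPolynomial (Fin n) k ⧸ p) := by
    refine ⟨RingHom.IsIntegral.tower_top (Ideal.Quotient.mk (p.comap φ)) _ ?_⟩
    exact hint
  refine le_trans ?_ (ringKrullDim_le_of_isIntegral (A := MvPolynomial (Fin n) k ⧸ p))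
  have hn := le_ringKrullDim_quotient_minimalPrime_add_spanFinrank hp
  have hrn : (r : WithBot ℕ∞) + J.spanFinrank ≤ n := by
    exact_mod_cast (add_comm _ _).trans_le hJr
  exact ENat.WithBot.add_le_add_natCast_right_iff.1 (hrn.trans hn)

lemma add_eq_of_isIntegral_of_injective {m : ℕ} {J : Ideal (MvPolynomial (Fin n) k)}
    (hJ : J ≠ ⊤) (hgen : J.spanFinrank ≤ m)
    (hdim : ringKrullDim (MvPolynomial (Fin n) k ⧸ J) + m ≤ n)
    [Algebra (MvPolynomial (Fin r) k) (MvPolynomial (Fin n) k ⧸ J)]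
    [Algebra.IsIntegral (MvPolynomial (Fin r) k) (MvPolynomial (Fin n) k ⧸ J)]
    (hinj : Function.Injective
      (algebraMap (MvPolynomial (Fin r) k) (MvPolynomial (Fin n) k ⧸ J))) :
    m + r = n := by
  have hr : ringKrullDim (MvPolynomial (Fin n) k ⧸ J) = r := by
    rw [ringKrullDim_eq_of_isIntegral_of_injective hinj]
    simp
  have hge := le_ringKrullDim_quotient_add_spanFinrank hJ
  rw [hr] at hdim hge
  have hle : r + m ≤ n := by exact_mod_cast hdim
  have hge : n ≤ r + J.spanFinrank := by exact_mod_cast hge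
  omega

end PolynomialRing

section RegularSequence

variable {R : Type*} [CommRing R] {t m : ℕ}

/-- The ideal `(q₀, …, qᵢ₋₁)` generated by the first `i` members of a finite family. -/
def prefixIdeal (q : Fin t → R) (i : ℕ) : Ideal R := Ideal.span (q '' {j | (j : ℕ) < i})

/-- Weak regularity of a finite family, in terms of elements: each `qᵢ` is a nonzerodivisor
modulo its predecessors. -/
def IsPrefixRegular (q : Fin t → R) : Prop :=
  ∀ i : Fin t, ∀ a, q i * a ∈ prefixIdeal q i → a ∈ prefixIdeal q i

lemma prefixIdeal_eq_span_range_castLE (q : Fin t → R) (h : m ≤ t) :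
    prefixIdeal q m = Ideal.span (Set.range fun j : Fin m => q (Fin.castLE h j)) := by
  refine congrArg Ideal.span (Set.ext fun x => ⟨?_, ?_⟩)
  · rintro ⟨j, hj, rfl⟩
    exact ⟨⟨j, hj⟩, rfl⟩
  · rintro ⟨j, rfl⟩
    exact ⟨_, j.2, rfl⟩

lemma prefixIdeal_self (q : Fin t → R) : prefixIdeal q t = Ideal.span (Set.range q) :=
  prefixIdeal_eq_span_range_castLE q le_rfl

lemma prefixIdeal_le_span_range (q : Fin t → R) (i : ℕ) :
    prefixIdeal q i ≤ Ideal.span (Set.range q) :=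
  Ideal.span_mono (Set.image_subset_range _ _)

lemma mem_prefixIdeal_succ {q : Fin t → R} {i : ℕ} (hi : i < t) {g : R} :
    g ∈ prefixIdeal q (i + 1) ↔ ∃ a, ∃ h ∈ prefixIdeal q i, g = a * q ⟨i, hi⟩ + h := by
  have hset : {j : Fin t | (j : ℕ) < i + 1} = insert ⟨i, hi⟩ {j : Fin t | (j : ℕ) < i} := by
    ext j
    simp only [Set.mem_ofPred_eq, Set.mem_insert_iff, Fin.ext_iff]
    omega
  rw [prefixIdeal, hset, Set.image_insert_eq, Ideal.mem_span_insert, prefixIdeal]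

lemma prefixIdeal_le_succ (q : Fin t → R) (i : ℕ) : prefixIdeal q i ≤ prefixIdeal q (i + 1) :=
  Ideal.span_mono (Set.image_mono fun _ => Nat.lt_succ_of_lt)

lemma spanFinrank_span_range_le (q : Fin m → R) : (Ideal.span (Set.range q)).spanFinrank ≤ m :=
  (Submodule.spanFinrank_span_le_ncard_of_finite (Set.finite_range q)).trans <| by
    rw [← Set.image_univ]
    exact (Set.ncard_image_le Set.finite_univ).trans (by simp [Set.ncard_univ])

lemma IsPrefixRegular.ringKrullDim_quotient_add_le {q : Fin t → R} (hq : IsPrefixRegular q)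
    {i : ℕ} (hi : i ≤ t) : ringKrullDim (R ⧸ prefixIdeal q i) + i ≤ ringKrullDim R := by
  induction i with
  | zero => simpa using ringKrullDim_quotient_le (prefixIdeal q 0)
  | succ i ih =>
    refine le_trans ?_ (ih (by omega))
    have hnzd : Ideal.Quotient.mk (prefixIdeal q i) (q ⟨i, hi⟩) ∈
        nonZeroDivisors (R ⧸ prefixIdeal q i) := by
      rw [mem_nonZeroDivisors_iff_left]
      intro x hx
      obtain ⟨a, rfl⟩ := Ideal.Quotient.mk_surjective x
      rw [← map_mul, Ideal.Quotient.eq_zero_iff_mem] at hx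
      exact Ideal.Quotient.eq_zero_iff_mem.2 (hq ⟨i, hi⟩ a hx)
    have hmem : q ⟨i, hi⟩ ∈ prefixIdeal q (i + 1) :=
      (mem_prefixIdeal_succ hi).2 ⟨1, 0, zero_mem _, by ring⟩
    have hdim := ringKrullDim_succ_le_of_surjective
      (Ideal.Quotient.factor (prefixIdeal_le_succ q i)) (Ideal.Quotient.factor_surjective _) hnzd
      (by rwa [Ideal.Quotient.factor_mk, Ideal.Quotient.eq_zero_iff_mem])
    push_cast
    rw [add_comm (i : WithBot ℕ∞) 1, ← add_assoc]
    gcongr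

lemma ofList_take_ofFn (q : Fin t → R) (i : ℕ) :
    Ideal.ofList ((List.ofFn q).take i) = prefixIdeal q i := by
  refine congrArg Ideal.span (Set.ext fun x => ?_)
  simp only [Set.mem_ofPred_eq, Set.mem_image, List.mem_take_iff_getElem, List.getElem_ofFn,
    List.length_ofFn]
  constructor
  · rintro ⟨j, hj, rfl⟩
    exact ⟨⟨j, by omega⟩, by simp; omega, rfl⟩
  · rintro ⟨j, hj, rfl⟩
    exact ⟨j, by have := j.2; omega, rfl⟩

lemma isPrefixRegular_of_isWeaklyRegular {q : Fin t → R}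
    (hq : RingTheory.Sequence.IsWeaklyRegular R (List.ofFn q)) : IsPrefixRegular q := by
  intro i a ha
  have hreg := hq.regular_mod_prev i (by simp)
  rw [Ideal.smul_top_eq_map, Algebra.algebraMap_self, Ideal.map_id, ofList_take_ofFn] at hreg
  refine Ideal.Quotient.eq_zero_iff_mem.1 (hreg ?_)
  simp only [List.getElem_ofFn]
  exact (Ideal.Quotient.eq_zero_iff_mem.2 ha).trans (smul_zero _).symm

end RegularSequence

section DegreeIntegrality

variable (k : Type*) {A A' ι : Type*} [CommRing k] [CommRing A] [Algebra k A]
  [CommRing A'] [Algebra k A']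

/-- The subalgebra `k[T, w j T : j]` of `A[T]`: the Rees algebra of the filtration of `k[w]` by
degree in the generators `w`. -/
noncomputable def degreeRees (w : ι → A) : Subalgebra k (Polynomial A) :=
  Algebra.adjoin k (insert Polynomial.X (Set.range fun j => Polynomial.C (w j) * Polynomial.X))

/-- `a` is integral over `k[w]` of degree at most `D`: it satisfies a monic equation
`a ^ N + ∑ i < N, p i * a ^ i = 0` in which `p i` is a polynomial of degree at most `D * (N - i)`
in `w`. Integrality of `a T ^ D` over the Rees algebra is an equivalent form for which closure
under ring operations is immediate. -/
def IsIntegralOfDegree (w : ι → A) (D : ℕ) (a : A) : Prop :=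
  IsIntegral (degreeRees k w) (Polynomial.C a * Polynomial.X ^ D)

variable {k} {w : ι → A}

lemma X_mem_degreeRees : (Polynomial.X : Polynomial A) ∈ degreeRees k w :=
  Algebra.subset_adjoin (Set.mem_insert _ _)

lemma C_mul_X_mem_degreeRees (j : ι) :
    (Polynomial.C (w j) * Polynomial.X : Polynomial A) ∈ degreeRees k w :=
  Algebra.subset_adjoin (Set.mem_insert_of_mem _ ⟨j, rfl⟩)

lemma isIntegral_degreeRees_of_mem {x : Polynomial A} (hx : x ∈ degreeRees k w) :
    IsIntegral (degreeRees k w) x :=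
  isIntegral_algebraMap (R := degreeRees k w) (A := Polynomial A) (x := ⟨x, hx⟩)

lemma exists_totalDegree_le_of_mem_degreeRees {x : Polynomial A} (hx : x ∈ degreeRees k w) :
    ∀ j, ∃ p : MvPolynomial ι k, p.totalDegree ≤ j ∧ x.coeff j = aeval w p := by
  induction hx using Algebra.adjoin_induction with
  | mem x hx =>
    intro j
    rcases eq_or_ne j 1 with rfl | hj <;> rcases hx with rfl | ⟨i, rfl⟩
    · exact ⟨1, by simp, by simp⟩
    · exact ⟨X i, (isHomogeneous_X k i).totalDegree_le, by simp⟩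
    · exact ⟨0, by simp, by simp [Polynomial.coeff_X_of_ne_one hj]⟩
    · exact ⟨0, by simp, by simp [Polynomial.coeff_X_of_ne_one hj]⟩
  | algebraMap c =>
    intro j
    rcases eq_or_ne j 0 with rfl | hj
    · exact ⟨C c, by simp, by simp [Polynomial.algebraMap_apply]⟩
    · exact ⟨0, by simp, by simp [Polynomial.algebraMap_apply, Polynomial.coeff_C, hj]⟩
  | add x y _ _ hx hy =>
    intro j
    obtain ⟨p, hp, hxp⟩ := hx j
    obtain ⟨q, hq, hyq⟩ := hy j
    exact ⟨p + q, (totalDegree_add _ _).trans (max_le hp hq), by simp [hxp, hyq]⟩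
  | mul x y _ _ hx hy =>
    intro j
    choose p hp hxp using hx
    choose q hq hyq using hy
    refine ⟨∑ e ∈ Finset.HasAntidiagonal.antidiagonal j, p e.1 * q e.2, ?_, ?_⟩
    · refine totalDegree_finsetSum_le fun e he => (totalDegree_mul _ _).trans ?_
      exact (add_le_add (hp e.1) (hq e.2)).trans (Finset.HasAntidiagonal.mem_antidiagonal.1 he).le
    · simp only [Polynomial.coeff_mul, map_sum, map_mul, hxp, hyq]

lemma map_mem_degreeRees {w' : ι → A'} (ψ : A →ₐ[k] A') (hw : ∀ j, ψ (w j) = w' j)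
    {x : Polynomial A} (hx : x ∈ degreeRees k w) :
    Polynomial.mapAlgHom ψ x ∈ degreeRees k w' := by
  have hle : (degreeRees k w).map (Polynomial.mapAlgHom ψ) ≤ degreeRees k w' := by
    rw [degreeRees, AlgHom.map_adjoin, Algebra.adjoin_le_iff]
    rintro _ ⟨y, rfl | ⟨j, rfl⟩, rfl⟩
    · simpa using X_mem_degreeRees
    · simpa [hw] using C_mul_X_mem_degreeRees (k := k) (w := w') j
  exact hle ⟨x, hx, rfl⟩

namespace IsIntegralOfDegree

variable {D D' : ℕ} {a b : A}

lemma generator (j : ι) : IsIntegralOfDegree k w 1 (w j) := by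
  simpa only [IsIntegralOfDegree, pow_one] using
    isIntegral_degreeRees_of_mem (C_mul_X_mem_degreeRees j)

protected lemma algebraMap (D : ℕ) (c : k) : IsIntegralOfDegree k w D (algebraMap k A c) :=
  isIntegral_degreeRees_of_mem <| mul_mem ((degreeRees k w).algebraMap_mem c)
    (pow_mem X_mem_degreeRees D)

lemma mono (h : D ≤ D') (ha : IsIntegralOfDegree k w D a) : IsIntegralOfDegree k w D' a := by
  have hX : (Polynomial.C a * Polynomial.X ^ D' : Polynomial A) =
      Polynomial.C a * Polynomial.X ^ D * Polynomial.X ^ (D' - D) := by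
    rw [mul_assoc, ← pow_add, Nat.add_sub_cancel' h]
  rw [IsIntegralOfDegree, hX]
  exact IsIntegral.mul ha ((isIntegral_degreeRees_of_mem X_mem_degreeRees).pow _)

protected lemma add (ha : IsIntegralOfDegree k w D a) (hb : IsIntegralOfDegree k w D b) :
    IsIntegralOfDegree k w D (a + b) := by
  rw [IsIntegralOfDegree, map_add, add_mul]
  exact IsIntegral.add ha hb

protected lemma mul (ha : IsIntegralOfDegree k w D a) (hb : IsIntegralOfDegree k w D' b) :
    IsIntegralOfDegree k w (D + D') (a * b) := by
  rw [IsIntegralOfDegree, map_mul, pow_add, mul_mul_mul_comm]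
  exact IsIntegral.mul ha hb

protected lemma sum {κ : Type*} {s : Finset κ} {a : κ → A}
    (h : ∀ i ∈ s, IsIntegralOfDegree k w D (a i)) :
    IsIntegralOfDegree k w D (∑ i ∈ s, a i) := by
  rw [IsIntegralOfDegree, map_sum, Finset.sum_mul]
  exact IsIntegral.sum _ h

protected lemma prod {κ : Type*} {s : Finset κ} {D : κ → ℕ} {a : κ → A}
    (h : ∀ i ∈ s, IsIntegralOfDegree k w (D i) (a i)) :
    IsIntegralOfDegree k w (∑ i ∈ s, D i) (∏ i ∈ s, a i) := by
  rw [IsIntegralOfDegree, map_prod, ← Finset.prod_pow_eq_pow_sum, ← Finset.prod_mul_distrib]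
  exact IsIntegral.prod _ h

protected lemma pow (ha : IsIntegralOfDegree k w D a) (m : ℕ) :
    IsIntegralOfDegree k w (D * m) (a ^ m) := by
  rw [IsIntegralOfDegree, map_pow, pow_mul, ← mul_pow]
  exact IsIntegral.pow ha m

protected lemma aeval {σ : Type*} {ξ : σ → A} (hξ : ∀ i, IsIntegralOfDegree k w 1 (ξ i))
    (f : MvPolynomial σ k) : IsIntegralOfDegree k w f.totalDegree (aeval ξ f) := by
  rw [aeval_def, eval₂_eq]
  refine .sum fun α hα => ?_
  have hmonomial := IsIntegralOfDegree.prod (k := k) (w := w) (s := α.support)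
    fun i _ => (hξ i).pow (α i)
  refine mono ?_ ((IsIntegralOfDegree.algebraMap 0 (coeff α f)).mul hmonomial)
  simpa [Finsupp.sum] using le_totalDegree hα

protected lemma map {w' : ι → A'} (ψ : A →ₐ[k] A') (hw : ∀ j, ψ (w j) = w' j)
    (ha : IsIntegralOfDegree k w D a) : IsIntegralOfDegree k w' D (ψ a) := by
  let Ψ : Polynomial A →ₐ[k] Polynomial A' := Polynomial.mapAlgHom ψ
  have hΨ := IsIntegral.map_of_comp_eq (R := degreeRees k w) (T := degreeRees k w')
    ((Ψ.comp (degreeRees k w).val).codRestrict (degreeRees k w')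
      fun x => map_mem_degreeRees ψ hw x.2).toRingHom
    Ψ.toRingHom rfl ha
  simpa [Ψ, IsIntegralOfDegree] using hΨ

lemma exists_relation [Nontrivial A] (ha : IsIntegralOfDegree k w D a) :
    ∃ (N : ℕ) (p : ℕ → MvPolynomial ι k), 0 < N ∧
      (∀ i < N, (p i).totalDegree ≤ D * (N - i)) ∧
      a ^ N + ∑ i ∈ Finset.range N, aeval w (p i) * a ^ i = 0 := by
  obtain ⟨P, hP, hP0⟩ := ha
  choose p hp hcoeff using fun i =>
    exists_totalDegree_le_of_mem_degreeRees (P.coeff i).2 (D * (P.natDegree - i))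
  refine ⟨P.natDegree, p, Nat.pos_of_ne_zero fun h0 => ?_, fun i _ => hp i, ?_⟩
  · simp [hP.natDegree_eq_zero.1 h0] at hP0
  have hP_coeff := congrArg (Polynomial.coeff · (D * P.natDegree)) hP0
  rw [Polynomial.eval₂_eq_sum_range, Finset.sum_range_succ, add_comm,
    hP.coeff_natDegree] at hP_coeff
  simp only [Polynomial.coeff_add, Polynomial.finsetSum_coeff, Polynomial.coeff_zero, map_one,
    one_mul, mul_pow, ← map_pow, ← pow_mul] at hP_coeff
  convert hP_coeff using 2
  · rw [Polynomial.coeff_C_mul_X_pow, if_pos rfl]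
  · refine Finset.sum_congr rfl fun i hi => ?_
    have hsplit : D * P.natDegree = D * (P.natDegree - i) + D * i := by
      rw [← mul_add, Nat.sub_add_cancel (Finset.mem_range.1 hi).le]
    rw [mul_comm (Polynomial.C (a ^ i)), ← mul_assoc, Polynomial.coeff_mul_C, hsplit,
      Polynomial.coeff_mul_X_pow, ← hcoeff i]
    rfl

lemma isIntegral [Nontrivial A] [Algebra (MvPolynomial ι k) A]
    (hw : ∀ c, algebraMap (MvPolynomial ι k) A c = aeval w c)
    (ha : IsIntegralOfDegree k w D a) : IsIntegral (MvPolynomial ι k) a := by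
  obtain ⟨N, p, -, -, hrel⟩ := ha.exists_relation
  refine ⟨Polynomial.X ^ N + ∑ i ∈ Finset.range N, Polynomial.C (p i) * Polynomial.X ^ i,
    Polynomial.monic_X_pow_add ?_, ?_⟩
  · simpa only [← Fin.sum_univ_eq_sum_range fun i => Polynomial.C (p i) * Polynomial.X ^ i]
      using Polynomial.degree_sum_fin_lt fun i : Fin N => p i
  · rw [← hrel]
    simp [Polynomial.eval₂_finsetSum, hw]

end IsIntegralOfDegree

lemma totalDegree_pow_of_ne_zero {R σ : Type*} [CommRing R] [IsDomain R] {c : MvPolynomial σ R}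
    (hc : c ≠ 0) (N : ℕ) : (c ^ N).totalDegree = N * c.totalDegree := by
  induction N with
  | zero => simp
  | succ N ih => rw [pow_succ, totalDegree_mul_of_isDomain (pow_ne_zero N hc) hc, ih, add_one_mul]

lemma totalDegree_le_of_pow_add_sum_eq_zero {R σ : Type*} [CommRing R] [IsDomain R]
    {c : MvPolynomial σ R} {p : ℕ → MvPolynomial σ R} {D N : ℕ}
    (hp : ∀ i < N, (p i).totalDegree ≤ D * (N - i))
    (hrel : c ^ N + ∑ i ∈ Finset.range N, p i * c ^ i = 0) : c.totalDegree ≤ D := by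
  by_contra! hlt
  have hc : c ≠ 0 := by rintro rfl; simp at hlt
  have hN : 0 < N := Nat.pos_of_ne_zero fun h => by simp [h] at hrel
  have hterm : ∀ i ∈ Finset.range N, (p i * c ^ i).totalDegree ≤ N * c.totalDegree - 1 := by
    intro i hi
    obtain ⟨j, hj, rfl⟩ : ∃ j, 0 < j ∧ N = i + j :=
      ⟨N - i, Nat.sub_pos_of_lt (Finset.mem_range.1 hi), by have := Finset.mem_range.1 hi; omega⟩
    have hpi := hp i (Finset.mem_range.1 hi)
    rw [Nat.add_sub_cancel_left] at hpi
    have hDj : D * j < c.totalDegree * j := Nat.mul_lt_mul_of_pos_right hlt hj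
    have := (totalDegree_mul (p i) (c ^ i)).trans (add_le_add hpi (totalDegree_pow c i))
    apply Nat.le_sub_one_of_lt
    nlinarith
  have hpow : (c ^ N).totalDegree ≤ N * c.totalDegree - 1 := by
    rw [eq_neg_of_add_eq_zero_left hrel, totalDegree_neg]
    exact totalDegree_finsetSum_le hterm
  rw [totalDegree_pow_of_ne_zero hc] at hpow
  have : 0 < N * c.totalDegree := Nat.mul_pos hN (by omega)
  omega

lemma IsIntegralOfDegree.totalDegree_le [IsDomain k] [Nontrivial A]
    (hw : AlgebraicIndependent k w) {D : ℕ} {c : MvPolynomial ι k}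
    (h : IsIntegralOfDegree k w D (aeval w c)) : c.totalDegree ≤ D := by
  obtain ⟨N, p, -, hp, hrel⟩ := h.exists_relation
  exact totalDegree_le_of_pow_add_sum_eq_zero hp (hw (by simpa using hrel))

end DegreeIntegrality

section NoetherNormalization

variable {R S σ : Type*} [CommRing R] [CommRing S] [Algebra R S]

lemma natDegree_finsetProd_le_of_forall_le {κ : Type*} {s : Finset κ} {f : κ → Polynomial S}
    {e : κ → ℕ} (h : ∀ i ∈ s, (f i).natDegree ≤ e i) :
    (∏ i ∈ s, f i).natDegree ≤ ∑ i ∈ s, e i :=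
  (Polynomial.natDegree_prod_le s f).trans (Finset.sum_le_sum h)

lemma coeff_finsetProd_of_forall_natDegree_le {κ : Type*} {s : Finset κ} {f : κ → Polynomial S}
    {e : κ → ℕ} (h : ∀ i ∈ s, (f i).natDegree ≤ e i) :
    (∏ i ∈ s, f i).coeff (∑ i ∈ s, e i) = ∏ i ∈ s, (f i).coeff (e i) := by
  induction s using Finset.cons_induction with
  | empty => simp
  | cons i s hi ih =>
    have hs : ∀ j ∈ s, (f j).natDegree ≤ e j := fun j hj => h j (Finset.mem_cons_of_mem hj)
    rw [Finset.prod_cons, Finset.sum_cons, Finset.prod_cons,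
      Polynomial.coeff_mul_add_eq_of_natDegree_le (h i (Finset.mem_cons_self i s))
        (natDegree_finsetProd_le_of_forall_le hs), ih hs]

lemma natDegree_aeval_monomial_le {L : σ → Polynomial S} (hL : ∀ i, (L i).natDegree ≤ 1)
    (α : σ →₀ ℕ) (c : S) : (aeval L (monomial α c)).natDegree ≤ α.degree := by
  rw [aeval_monomial, ← Polynomial.C_eq_algebraMap]
  refine (Polynomial.natDegree_C_mul_le _ _).trans (natDegree_finsetProd_le_of_forall_le ?_)
  exact fun i _ => by simpa using Polynomial.natDegree_pow_le_of_le (α i) (hL i)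

lemma coeff_degree_aeval_monomial {L : σ → Polynomial S} (hL : ∀ i, (L i).natDegree ≤ 1)
    (α : σ →₀ ℕ) (c : S) :
    (aeval L (monomial α c)).coeff α.degree = eval (fun i => (L i).coeff 1) (monomial α c) := by
  rw [aeval_monomial, ← Polynomial.C_eq_algebraMap, Polynomial.coeff_C_mul, eval_monomial]
  congr 1
  refine (coeff_finsetProd_of_forall_natDegree_le fun i _ => ?_).trans
    (Finset.prod_congr rfl fun i _ => ?_)
  · simpa using Polynomial.natDegree_pow_le_of_le (α i) (hL i)
  · simpa using Polynomial.coeff_pow_of_natDegree_le (m := α i) (hL i)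

lemma natDegree_aeval_le_totalDegree {L : σ → Polynomial S} (hL : ∀ i, (L i).natDegree ≤ 1)
    (F : MvPolynomial σ S) : (aeval L F).natDegree ≤ F.totalDegree := by
  rw [F.as_sum, map_sum, ← F.as_sum]
  exact Polynomial.natDegree_sum_le_of_forall_le _ _ fun α hα =>
    (natDegree_aeval_monomial_le hL α _).trans (le_totalDegree hα)

lemma coeff_aeval_of_totalDegree_le {L : σ → Polynomial S} (hL : ∀ i, (L i).natDegree ≤ 1)
    {F : MvPolynomial σ S} {D : ℕ} (hF : F.totalDegree ≤ D) :
    (aeval L F).coeff D = eval (fun i => (L i).coeff 1) (homogeneousComponent D F) := by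
  rw [homogeneousComponent_apply, map_sum, Finset.sum_filter]
  conv_lhs => rw [F.as_sum, map_sum, Polynomial.finsetSum_coeff]
  refine Finset.sum_congr rfl fun α hα => ?_
  split_ifs with hα_deg
  · rw [← hα_deg, coeff_degree_aeval_monomial hL]
  · exact Polynomial.coeff_eq_zero_of_natDegree_lt <|
      (natDegree_aeval_monomial_le hL α _).trans_lt
        (lt_of_le_of_ne ((le_totalDegree hα).trans hF) hα_deg)

lemma isIntegral_of_aeval_eq_zero {F : MvPolynomial σ R} {D : ℕ} (hF : F.totalDegree ≤ D)
    {z lam : σ → R} (hunit : IsUnit (eval lam (homogeneousComponent D F))) {y : S}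
    (hy : aeval (fun i => algebraMap R S (z i) + algebraMap R S (lam i) * y) F = 0) :
    IsIntegral R y := by
  let L : σ → Polynomial R := fun i => Polynomial.C (z i) + Polynomial.C (lam i) * Polynomial.X
  have hL : ∀ i, (L i).natDegree ≤ 1 := fun i => by simp only [L]; compute_degree
  have hL_coeff : (fun i => (L i).coeff 1) = lam := by funext i; simp [L, Polynomial.coeff_C]
  obtain ⟨u, hu⟩ := hunit
  refine ⟨Polynomial.C (↑u⁻¹ : R) * aeval L F, ?_, ?_⟩
  · refine Polynomial.monic_of_natDegree_le_of_coeff_eq_one D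
      ((Polynomial.natDegree_C_mul_le _ _).trans
        ((natDegree_aeval_le_totalDegree hL F).trans hF)) ?_
    rw [Polynomial.coeff_C_mul, coeff_aeval_of_totalDegree_le hL hF, hL_coeff, ← hu,
      Units.inv_mul]
  · have hcomp : Polynomial.aeval y (aeval L F) = 0 := by
      rw [← hy, ← AlgHom.restrictScalars_apply R, ← AlgHom.comp_apply, comp_aeval]
      simp [L]
    rw [← Polynomial.aeval_def, map_mul, hcomp, mul_zero]

/-- The homogenization `∑ c_α T ^ (D - |α|) x ^ α` of `f = ∑ c_α x ^ α` to degree `D` by an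
element `T` of the coefficient ring. The truncated subtraction is harmless when `D` bounds the
degree of `f`. -/
noncomputable def homogenizeAt (T : S) (D : ℕ) (f : MvPolynomial σ R) : MvPolynomial σ S :=
  ∑ α ∈ f.support, monomial α (algebraMap R S (coeff α f) * T ^ (D - α.degree))

lemma totalDegree_homogenizeAt_le (T : S) (D : ℕ) (f : MvPolynomial σ R) :
    (homogenizeAt T D f).totalDegree ≤ f.totalDegree :=
  totalDegree_finsetSum_le fun α hα => (totalDegree_monomial_le α _).trans (le_totalDegree hα)

lemma coeff_homogenizeAt (T : S) (D : ℕ) (f : MvPolynomial σ R) (α : σ →₀ ℕ) :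
    coeff α (homogenizeAt T D f) = algebraMap R S (coeff α f) * T ^ (D - α.degree) := by
  classical
  simp only [homogenizeAt, coeff_sum, coeff_monomial, Finset.sum_ite_eq', mem_support_iff]
  split_ifs with h
  · rfl
  · simp [not_not.1 h]

lemma homogeneousComponent_homogenizeAt (T : S) (D : ℕ) (f : MvPolynomial σ R) :
    homogeneousComponent D (homogenizeAt T D f) =
      map (algebraMap R S) (homogeneousComponent D f) := by
  ext α
  rw [coeff_map, coeff_homogeneousComponent, coeff_homogeneousComponent, coeff_homogenizeAt]
  split_ifs with h <;> simp [h]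

lemma finsuppProd_mul_const_pow (v : σ → S) (t : S) (α : σ →₀ ℕ) :
    (α.prod fun i e => (v i * t) ^ e) = t ^ α.degree * α.prod fun i e => v i ^ e := by
  simp only [mul_pow, Finsupp.prod_mul]
  rw [mul_comm, Finsupp.prod, Finset.prod_pow_eq_pow_sum, Finsupp.degree_apply]

lemma aeval_homogenizeAt {B : Type*} [CommRing B] [Algebra S B] [Algebra R B] [IsScalarTower R S B]
    {f : MvPolynomial σ R} {D : ℕ} (hf : f.totalDegree ≤ D) (T : S) (v : σ → B) :
    aeval (fun i => v i * algebraMap S B T) (homogenizeAt T D f) =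
      algebraMap S B T ^ D * aeval v f := by
  conv_rhs => rw [f.as_sum, map_sum, Finset.mul_sum]
  rw [homogenizeAt, map_sum]
  refine Finset.sum_congr rfl fun α hα => ?_
  have hα_deg : α.degree ≤ D := (le_totalDegree hα).trans hf
  rw [aeval_monomial, aeval_monomial, finsuppProd_mul_const_pow, map_mul, map_pow,
    ← IsScalarTower.algebraMap_apply, ← pow_sub_mul_pow _ hα_deg]
  ring

lemma eval_mul_const_of_isHomogeneous {F : MvPolynomial σ R} {D : ℕ} (hF : F.IsHomogeneous D)
    (v : σ → R) (t : R) : eval (fun i => v i * t) F = t ^ D * eval v F := by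
  conv_rhs => rw [F.as_sum, map_sum, Finset.mul_sum]
  conv_lhs => rw [F.as_sum, map_sum]
  refine Finset.sum_congr rfl fun α hα => ?_
  have hα_deg : α.degree = D := by
    rw [Finsupp.degree_eq_weight_one]
    exact hF (mem_support_iff.1 hα)
  rw [eval_monomial, eval_monomial, finsuppProd_mul_const_pow, hα_deg, mul_left_comm]

lemma homogeneousComponent_totalDegree_ne_zero {f : MvPolynomial σ R} (hf : f ≠ 0) :
    homogeneousComponent f.totalDegree f ≠ 0 := by
  obtain ⟨α, hα, hα_deg⟩ := Finset.exists_mem_eq_sup f.support (support_nonempty.2 hf)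
    fun s => s.sum fun _ e => e
  refine ne_zero_iff.2 ⟨α, ?_⟩
  rw [coeff_homogeneousComponent, if_pos (Finsupp.degree_apply α ▸ hα_deg.symm)]
  exact mem_support_iff.1 hα

variable {k A : Type*} [Field k] [CommRing A] [Algebra k A]

lemma exists_eval_cons_one_ne_zero [Infinite k] {n D : ℕ} {F : MvPolynomial (Fin (n + 1)) k}
    (hF : F.IsHomogeneous D) (hF0 : F ≠ 0) :
    ∃ lam : Fin n → k, eval (Fin.cons 1 lam) F ≠ 0 := by
  obtain ⟨μ, hμ⟩ : ∃ μ, eval μ (X 0 * F) ≠ 0 := by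
    by_contra! h
    exact mul_ne_zero (X_ne_zero 0) hF0 (MvPolynomial.funext fun μ => by rw [h, map_zero])
  rw [map_mul, eval_X] at hμ
  have hμ0 := left_ne_zero_of_mul hμ
  have hscale : μ = fun i => (Fin.cons 1 fun i => μ i.succ / μ 0 : Fin (n + 1) → k) i * μ 0 := by
    funext i
    cases i using Fin.cases <;> simp [hμ0]
  refine ⟨fun i => μ i.succ / μ 0, fun h => right_ne_zero_of_mul hμ ?_⟩
  rw [hscale, eval_mul_const_of_isHomogeneous hF, h, mul_zero]

lemma IsIntegralOfDegree.of_aeval_eq_zero {n : ℕ} {ι : Type*} {w : ι → A} {v : Fin (n + 1) → A}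
    {f : MvPolynomial (Fin (n + 1)) k} (hf : aeval v f = 0) {lam : Fin n → k}
    (hlam : eval (Fin.cons 1 lam) (homogeneousComponent f.totalDegree f) ≠ 0)
    (hv : ∀ i : Fin n, IsIntegralOfDegree k w 1 (v i.succ - lam i • v 0)) :
    IsIntegralOfDegree k w 1 (v 0) := by
  let S := integralClosure (degreeRees k w) (Polynomial A)
  let T : S := ⟨Polynomial.X, isIntegral_degreeRees_of_mem X_mem_degreeRees⟩
  let z : Fin (n + 1) → S := Fin.cons 0 fun i => ⟨_, hv i⟩
  let lamS : Fin (n + 1) → S := fun i => algebraMap k S ((Fin.cons 1 lam : Fin (n + 1) → k) i)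
  have hpoint : (fun i => algebraMap S (Polynomial A) (z i) + algebraMap S (Polynomial A) (lamS i) *
      (Polynomial.C (v 0) * Polynomial.X ^ 1)) =
      fun i => Polynomial.C (v i) * algebraMap S (Polynomial A) T := by
    funext i
    cases i using Fin.cases with
    | zero => simp [z, lamS, T]
    | succ i =>
      change Polynomial.C (v i.succ - lam i • v 0) * Polynomial.X ^ 1 +
        Polynomial.C (algebraMap k A (lam i)) * (Polynomial.C (v 0) * Polynomial.X ^ 1) =
        Polynomial.C (v i.succ) * Polynomial.X
      rw [Algebra.smul_def, map_sub, map_mul]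
      ring
  have hy : IsIntegral S (Polynomial.C (v 0) * Polynomial.X ^ 1) := by
    refine isIntegral_of_aeval_eq_zero (F := homogenizeAt T f.totalDegree f) (z := z) (lam := lamS)
      (totalDegree_homogenizeAt_le T _ f) ?_ ?_
    · have heval := aeval_algebraMap_apply (A := k) S (Fin.cons 1 lam : Fin (n + 1) → k)
        (homogeneousComponent f.totalDegree f)
      rw [homogeneousComponent_homogenizeAt, eval_map, ← aeval_def]
      exact heval ▸ hlam.isUnit.map (algebraMap k S)
    · have : IsScalarTower k S (Polynomial A) := .of_algebraMap_eq fun _ => rfl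
      have hCv : aeval (fun i => Polynomial.C (v i)) f = Polynomial.C (aeval v f) :=
        aeval_algebraMap_apply (Polynomial A) v f
      rw [hpoint, aeval_homogenizeAt (le_refl f.totalDegree) T fun i => Polynomial.C (v i), hCv, hf,
        map_zero, mul_zero]
  exact isIntegral_trans _ hy

theorem exists_linear_noetherNormalization [Infinite k] [Nontrivial A] {n : ℕ} (v : Fin n → A) :
    ∃ (r : ℕ) (w : Fin r → A), (∀ j, w j ∈ Submodule.span k (Set.range v)) ∧
      AlgebraicIndependent k w ∧ ∀ i, IsIntegralOfDegree k w 1 (v i) := by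
  induction n with
  | zero => exact ⟨0, v, fun j => j.elim0, algebraicIndependent_empty_type, fun j => j.elim0⟩
  | succ n ih =>
    by_cases hv : AlgebraicIndependent k v
    · exact ⟨n + 1, v, fun j => Submodule.subset_span ⟨j, rfl⟩, hv, .generator⟩
    obtain ⟨f, hf, hf0⟩ : ∃ f : MvPolynomial (Fin (n + 1)) k, aeval v f = 0 ∧ f ≠ 0 := by
      simpa [algebraicIndependent_iff] using hv
    obtain ⟨lam, hlam⟩ := exists_eval_cons_one_ne_zero
      (homogeneousComponent_isHomogeneous _ f) (homogeneousComponent_totalDegree_ne_zero hf0)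
    obtain ⟨r, w, hw_span, hw, hint⟩ := ih fun i => v i.succ - lam i • v 0
    have hv0 : IsIntegralOfDegree k w 1 (v 0) := .of_aeval_eq_zero hf hlam hint
    refine ⟨r, w, fun j => Submodule.span_le.2 ?_ (hw_span j), hw, fun i => ?_⟩
    · rintro _ ⟨i, rfl⟩
      exact sub_mem (Submodule.subset_span ⟨_, rfl⟩)
        (Submodule.smul_mem _ _ (Submodule.subset_span ⟨_, rfl⟩))
    · cases i using Fin.cases with
      | zero => exact hv0
      | succ i =>
        rw [← sub_add_cancel (v i.succ) (lam i • v 0), Algebra.smul_def]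
        refine (Algebra.smul_def (lam i) (v 0) ▸ hint i).add ?_
        simpa using (IsIntegralOfDegree.algebraMap 0 (lam i)).mul hv0

theorem exists_linear_noetherNormalization_quotient [Infinite k] {n : ℕ}
    {J : Ideal (MvPolynomial (Fin n) k)} (hJ : J ≠ ⊤) :
    ∃ (r : ℕ) (ℓ : Fin r → MvPolynomial (Fin n) k),
      (∀ j, ℓ j ∈ Submodule.span k (Set.range X)) ∧
      AlgebraicIndependent k (fun j => Ideal.Quotient.mkₐ k J (ℓ j)) ∧
      ∀ i, IsIntegralOfDegree k (fun j => Ideal.Quotient.mkₐ k J (ℓ j)) 1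
        (Ideal.Quotient.mkₐ k J (X i)) := by
  have : Nontrivial (MvPolynomial (Fin n) k ⧸ J) := Ideal.Quotient.nontrivial_iff.2 hJ
  obtain ⟨r, w, hw_span, hw, hint⟩ := exists_linear_noetherNormalization (k := k)
    fun i => Ideal.Quotient.mkₐ k J (X i : MvPolynomial (Fin n) k)
  have hlift : ∀ j, ∃ l ∈ Submodule.span k (Set.range X), Ideal.Quotient.mkₐ k J l = w j := by
    intro j
    refine Submodule.mem_map (f := (Ideal.Quotient.mkₐ k J).toLinearMap).1 ?_
    rw [Submodule.map_span, ← Set.range_comp]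
    exact hw_span j
  choose ℓ hℓ hℓw using hlift
  obtain rfl : (fun j => Ideal.Quotient.mkₐ k J (ℓ j)) = w := funext hℓw
  exact ⟨r, ℓ, hℓ, hw, hint⟩

end NoetherNormalization

section GenericFibre

variable {k : Type*} [Field k] {n r : ℕ} {J p : Ideal (MvPolynomial (Fin n) k)}
  {ℓ : Fin r → MvPolynomial (Fin n) k}
  {Ω : Type*} [Field Ω] [Algebra k Ω] [Algebra (MvPolynomial (Fin r) k) Ω]
  {ξ : Fin n → Ω}

/-- The generic fibre of the map `ℓ` from the zero set of `J` to affine `r`-space: the zeros of `J`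
with coordinates in an extension `Ω` of `k[y₁, …, yᵣ]` at which `ℓ j` takes the value `yⱼ`. -/
def genericFibre (J : Ideal (MvPolynomial (Fin n) k)) (ℓ : Fin r → MvPolynomial (Fin n) k)
    (Ω : Type*) [Field Ω] [Algebra k Ω] [Algebra (MvPolynomial (Fin r) k) Ω] :
    Set (Fin n → Ω) :=
  {ξ | (∀ f ∈ J, aeval ξ f = 0) ∧
    ∀ j, aeval ξ (ℓ j) = algebraMap (MvPolynomial (Fin r) k) Ω (X j)}

lemma isIntegral_quotientMk_comp_aeval (hJ : J ≠ ⊤)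
    (hint : ∀ i, IsIntegralOfDegree k (fun j => Ideal.Quotient.mkₐ k J (ℓ j)) 1
      (Ideal.Quotient.mkₐ k J (X i))) :
    ((Ideal.Quotient.mk J).comp (aeval (R := k) ℓ).toRingHom).IsIntegral := by
  intro x
  have : Nontrivial (MvPolynomial (Fin n) k ⧸ J) := Ideal.Quotient.nontrivial_iff.2 hJ
  obtain ⟨f, rfl⟩ := Ideal.Quotient.mk_surjective x
  let : Algebra (MvPolynomial (Fin r) k) (MvPolynomial (Fin n) k ⧸ J) :=
    ((Ideal.Quotient.mk J).comp (aeval (R := k) ℓ).toRingHom).toAlgebra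
  have hf := IsIntegralOfDegree.aeval hint f
  rw [← AlgHom.congr_fun (comp_aeval (R := k) X (Ideal.Quotient.mkₐ k J)) f, aeval_X_left] at hf
  exact hf.isIntegral fun c => AlgHom.congr_fun (comp_aeval (R := k) ℓ (Ideal.Quotient.mkₐ k J)) c

lemma isIntegralOfDegree_of_mem_genericFibre {l : Fin n} {D : ℕ}
    (hint : IsIntegralOfDegree k (fun j => Ideal.Quotient.mkₐ k J (ℓ j)) D
      (Ideal.Quotient.mkₐ k J (X l))) (hξ : ξ ∈ genericFibre J ℓ Ω) :
    IsIntegralOfDegree k (fun j => algebraMap (MvPolynomial (Fin r) k) Ω (X j)) D (ξ l) := by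
  have h := hint.map (Ideal.Quotient.liftₐ J (aeval ξ) hξ.1) hξ.2
  rwa [show Ideal.Quotient.liftₐ J (aeval ξ) hξ.1 (Ideal.Quotient.mkₐ k J (X l)) = ξ l from
    aeval_X ξ l] at h

variable [IsScalarTower k (MvPolynomial (Fin r) k) Ω]

lemma aeval_aeval_of_mem_genericFibre (hξ : ξ ∈ genericFibre J ℓ Ω) (c : MvPolynomial (Fin r) k) :
    aeval ξ (aeval ℓ c) = algebraMap (MvPolynomial (Fin r) k) Ω c := by
  have h : (aeval ξ).comp (aeval ℓ) = IsScalarTower.toAlgHom k (MvPolynomial (Fin r) k) Ω :=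
    algHom_ext fun j => by simpa using hξ.2 j
  exact AlgHom.congr_fun h c

lemma finite_genericFibre
    (hint : ((Ideal.Quotient.mk J).comp (aeval (R := k) ℓ).toRingHom).IsIntegral) :
    (genericFibre J ℓ Ω).Finite := by
  choose P hP hP0 using fun l : Fin n => hint (Ideal.Quotient.mk J (X l))
  have hroots (l : Fin n) : {z : Ω | Polynomial.eval₂ (algebraMap _ Ω) z (P l) = 0}.Finite := by
    refine (Polynomial.rootSet_finite ((P l).map (algebraMap _ Ω)) Ω).subset fun z hz => ?_
    rw [Polynomial.mem_rootSet, Polynomial.aeval_map_algebraMap]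
    exact ⟨((hP l).map _).ne_zero, hz⟩
  refine (Set.Finite.pi' hroots).subset fun ξ hξ l => ?_
  have hPJ : Polynomial.eval₂ (aeval (R := k) ℓ).toRingHom (X l) (P l) ∈ J := by
    rw [← Ideal.Quotient.eq_zero_iff_mem, Polynomial.hom_eval₂]
    exact hP0 l
  have hPξ : (aeval ξ).toRingHom (Polynomial.eval₂ (aeval (R := k) ℓ).toRingHom (X l) (P l)) = 0 :=
    hξ.1 _ hPJ
  have hcomp : (aeval ξ).toRingHom.comp (aeval (R := k) ℓ).toRingHom =
      algebraMap (MvPolynomial (Fin r) k) Ω :=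
    RingHom.ext fun c => aeval_aeval_of_mem_genericFibre hξ c
  rwa [Polynomial.hom_eval₂, hcomp,
    show (aeval ξ).toRingHom (X l) = ξ l from aeval_X ξ l] at hPξ

lemma exists_mem_genericFibre_of_comap_eq_bot [IsAlgClosed Ω]
    (hinj : Function.Injective (algebraMap (MvPolynomial (Fin r) k) Ω)) (hp : p.IsPrime)
    (hint : ((Ideal.Quotient.mk p).comp (aeval (R := k) ℓ).toRingHom).IsIntegral)
    (hcomap : p.comap (aeval (R := k) ℓ).toRingHom = ⊥) :
    ∃ ξ ∈ genericFibre p ℓ Ω, ∀ f, aeval ξ f = 0 → f ∈ p := by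
  let : Algebra (MvPolynomial (Fin r) k) (MvPolynomial (Fin n) k ⧸ p) :=
    ((Ideal.Quotient.mk p).comp (aeval (R := k) ℓ).toRingHom).toAlgebra
  have : Algebra.IsIntegral (MvPolynomial (Fin r) k) (MvPolynomial (Fin n) k ⧸ p) := ⟨hint⟩
  have : FaithfulSMul (MvPolynomial (Fin r) k) (MvPolynomial (Fin n) k ⧸ p) := by
    rw [faithfulSMul_iff_algebraMap_injective, injective_iff_map_eq_zero]
    intro c hc
    rw [← Ideal.mem_bot, ← hcomap, Ideal.mem_comap]
    exact Ideal.Quotient.eq_zero_iff_mem.1 hc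
  have : FaithfulSMul (MvPolynomial (Fin r) k) Ω :=
    (faithfulSMul_iff_algebraMap_injective _ _).2 hinj
  have : IsScalarTower k (MvPolynomial (Fin r) k) (MvPolynomial (Fin n) k ⧸ p) :=
    .of_algebraMap_eq fun c => congrArg (Ideal.Quotient.mk p) ((aeval ℓ).commutes c).symm
  let ψ : (MvPolynomial (Fin n) k ⧸ p) →ₐ[MvPolynomial (Fin r) k] Ω := IsAlgClosed.lift
  have hψ : Function.Injective ψ := by
    rw [← AlgHom.coe_toRingHom, RingHom.injective_iff_ker_eq_bot]
    refine Ideal.eq_bot_of_comap_eq_bot (R := MvPolynomial (Fin r) k) ?_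
    rwa [RingHom.comap_ker, AlgHom.comp_algebraMap, ← RingHom.injective_iff_ker_eq_bot]
  let θ : MvPolynomial (Fin n) k →ₐ[k] Ω := (ψ.restrictScalars k).comp (Ideal.Quotient.mkₐ k p)
  have hθ (f) : aeval (fun l => θ (X l)) f = θ f := (AlgHom.congr_fun (aeval_unique θ) f).symm
  refine ⟨fun l => θ (X l), ⟨fun f hf => ?_, fun j => ?_⟩, fun f hf => ?_⟩
  · rw [hθ]
    exact (congrArg ψ (Ideal.Quotient.eq_zero_iff_mem.2 hf)).trans (map_zero ψ)
  · rw [hθ, ← ψ.commutes]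
    exact congrArg (fun g => ψ (Ideal.Quotient.mk p g)) (aeval_X ℓ j).symm
  · rw [hθ] at hf
    exact Ideal.Quotient.eq_zero_iff_mem.1 ((map_eq_zero_iff ψ hψ).1 hf)

lemma mem_of_forall_mem_genericFibre [IsAlgClosed Ω] (hrad : J.IsRadical)
    (hinj : Function.Injective (algebraMap (MvPolynomial (Fin r) k) Ω))
    (hint : ((Ideal.Quotient.mk J).comp (aeval (R := k) ℓ).toRingHom).IsIntegral)
    (hJr : J.spanFinrank + r ≤ n) {f : MvPolynomial (Fin n) k}
    (hf : ∀ ξ ∈ genericFibre J ℓ Ω, aeval ξ f = 0) : f ∈ J := by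
  rw [← hrad.radical, ← Ideal.sInf_minimalPrimes, Ideal.mem_sInf]
  intro p hp
  have hintp : ((Ideal.Quotient.mk p).comp (aeval (R := k) ℓ).toRingHom).IsIntegral :=
    hint.trans _ (Ideal.Quotient.factor hp.1.2)
      (RingHom.isIntegral_of_surjective _ (Ideal.Quotient.factor_surjective hp.1.2))
  obtain ⟨ξ, hξ, hker⟩ := exists_mem_genericFibre_of_comap_eq_bot hinj hp.1.1 hintp
    (comap_minimalPrime_eq_bot_of_isIntegral hJr _ hint hp)
  exact hker f (hf ξ ⟨fun g hg => hξ.1 g (hp.1.2 hg), hξ.2⟩)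

lemma exists_algebraMap_eq_of_forall_algEquiv_eq {B Ω : Type*} [CommRing B] [IsDomain B]
    [CharZero B] [IsIntegrallyClosed B] [Field Ω] [Algebra B Ω] [Algebra (FractionRing B) Ω]
    [IsScalarTower B (FractionRing B) Ω] [IsAlgClosure (FractionRing B) Ω]
    {x : Ω} (hx : IsIntegral B x) (h : ∀ σ : Ω ≃ₐ[B] Ω, σ x = x) :
    ∃ c : B, algebraMap B Ω c = x := by
  have : CharZero (FractionRing B) :=
    charZero_of_injective_algebraMap (IsFractionRing.injective B (FractionRing B))
  have : Normal (FractionRing B) Ω := IsAlgClosure.normal _ _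
  have : IsGalois (FractionRing B) Ω := ⟨⟩
  obtain ⟨z, rfl⟩ := (InfiniteGalois.mem_range_algebraMap_iff_fixed (k := FractionRing B) x).2
    fun σ => h (σ.restrictScalars B)
  obtain ⟨c, rfl⟩ := IsIntegrallyClosed.isIntegral_iff.1
    ((isIntegral_algebraMap_iff (algebraMap (FractionRing B) Ω).injective).1 hx)
  exact ⟨c, IsScalarTower.algebraMap_apply B (FractionRing B) Ω c⟩

/-- A linear Noether normalization of the zero set of `J` whose generic fibre is a finite set of
points of degree-one integral coordinates that determines `J`, over a field `Ω` large enough for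
Galois descent to `k[y₁, …, yᵣ]`. -/
structure FiniteGenericFibre (J : Ideal (MvPolynomial (Fin n) k)) (r : ℕ)
    (Ω : Type*) [Field Ω] [Algebra k Ω] [Algebra (MvPolynomial (Fin r) k) Ω] where
  lin : Fin r → MvPolynomial (Fin n) k
  lin_mem_span : ∀ j, lin j ∈ Submodule.span k (Set.range X)
  injective : Function.Injective (algebraMap (MvPolynomial (Fin r) k) Ω)
  descent : ∀ x : Ω, IsIntegral (MvPolynomial (Fin r) k) x →
    (∀ σ : Ω ≃ₐ[MvPolynomial (Fin r) k] Ω, σ x = x) →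
    ∃ c : MvPolynomial (Fin r) k, algebraMap _ Ω c = x
  pts : Finset (Fin n → Ω)
  coe_pts : (pts : Set (Fin n → Ω)) = genericFibre J lin Ω
  isIntegralOfDegree_coord : ∀ ξ ∈ pts, ∀ l,
    IsIntegralOfDegree k (fun j => algebraMap (MvPolynomial (Fin r) k) Ω (X j)) 1 (ξ l)
  mem_of_forall_aeval_eq_zero : ∀ f, (∀ ξ ∈ pts, aeval ξ f = 0) → f ∈ J

theorem exists_finiteGenericFibre [CharZero k] {m : ℕ} (hJ : J ≠ ⊤) (hgen : J.spanFinrank ≤ m)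
    (hdim : ringKrullDim (MvPolynomial (Fin n) k ⧸ J) + m ≤ n) (hrad : J.IsRadical) :
    ∃ r : ℕ, m + r = n ∧ Nonempty (FiniteGenericFibre J r
      (AlgebraicClosure (FractionRing (MvPolynomial (Fin r) k)))) := by
  obtain ⟨r, ℓ, hℓ, hind, hdeg⟩ := exists_linear_noetherNormalization_quotient hJ
  have hint := isIntegral_quotientMk_comp_aeval hJ hdeg
  have hmr : m + r = n := by
    let : Algebra (MvPolynomial (Fin r) k) (MvPolynomial (Fin n) k ⧸ J) :=
      ((Ideal.Quotient.mk J).comp (aeval (R := k) ℓ).toRingHom).toAlgebra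
    have : Algebra.IsIntegral (MvPolynomial (Fin r) k) (MvPolynomial (Fin n) k ⧸ J) := ⟨hint⟩
    refine add_eq_of_isIntegral_of_injective hJ hgen hdim ?_
    have hcomp := comp_aeval (R := k) ℓ (Ideal.Quotient.mkₐ k J)
    intro a b hab
    refine hind ?_
    rw [← hcomp]
    exact hab
  have hinj : Function.Injective (algebraMap (MvPolynomial (Fin r) k)
      (AlgebraicClosure (FractionRing (MvPolynomial (Fin r) k)))) := by
    rw [IsScalarTower.algebraMap_eq _ (FractionRing (MvPolynomial (Fin r) k))]
    exact (algebraMap (FractionRing (MvPolynomial (Fin r) k)) _).injective.comp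
      (IsFractionRing.injective _ _)
  have hfin := finite_genericFibre
    (Ω := AlgebraicClosure (FractionRing (MvPolynomial (Fin r) k))) hint
  exact ⟨r, hmr, ⟨{
    lin := ℓ
    lin_mem_span := hℓ
    injective := hinj
    descent := fun x => exists_algebraMap_eq_of_forall_algEquiv_eq
    pts := hfin.toFinset
    coe_pts := hfin.coe_toFinset
    isIntegralOfDegree_coord := fun ξ hξ l =>
      isIntegralOfDegree_of_mem_genericFibre (hdeg l) (hfin.mem_toFinset.1 hξ)
    mem_of_forall_aeval_eq_zero := fun f hf =>
      mem_of_forall_mem_genericFibre hrad hinj hint (by omega)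
        fun ξ hξ => hf ξ (hfin.mem_toFinset.2 hξ) }⟩⟩

end GenericFibre

section Bezoutian

variable {k A σ : Type*} [CommRing k] [CommRing A] [Algebra k A] [Fintype σ]

/-- `θ` writes the difference `f(x) - f(y)` as `∑ θₗ(x, y) (xₗ - yₗ)` with coefficients of degree
at most `D`; the variables `x` are indexed by `Sum.inl` and `y` by `Sum.inr`. -/
structure IsBezoutian (f : MvPolynomial σ k) (D : ℕ) (θ : σ → MvPolynomial (σ ⊕ σ) k) : Prop where
  sub_eq : rename Sum.inl f - rename Sum.inr f = ∑ l, θ l * (X (Sum.inl l) - X (Sum.inr l))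
  totalDegree_le : ∀ l, (θ l).totalDegree ≤ D

namespace IsBezoutian

variable {f g : MvPolynomial σ k} {D D' : ℕ} {θ η : σ → MvPolynomial (σ ⊕ σ) k}

lemma mono (h : IsBezoutian f D θ) (hD : D ≤ D') : IsBezoutian f D' θ :=
  ⟨h.sub_eq, fun l => (h.totalDegree_le l).trans hD⟩

protected lemma const (c : k) (D : ℕ) : IsBezoutian (C c : MvPolynomial σ k) D 0 :=
  ⟨by simp, by simp⟩

protected lemma add (hf : IsBezoutian f D θ) (hg : IsBezoutian g D η) :
    IsBezoutian (f + g) D (θ + η) where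
  sub_eq := by
    simp only [map_add, Pi.add_apply, add_mul, Finset.sum_add_distrib, ← hf.sub_eq, ← hg.sub_eq]
    ring
  totalDegree_le l :=
    (totalDegree_add _ _).trans (max_le (hf.totalDegree_le l) (hg.totalDegree_le l))

protected lemma smul (c : k) (h : IsBezoutian f D θ) : IsBezoutian (c • f) D (c • θ) where
  sub_eq := by
    simp only [map_smul, Pi.smul_apply, smul_mul_assoc, ← Finset.smul_sum, ← h.sub_eq, smul_sub]
  totalDegree_le l := (totalDegree_smul_le _ _).trans (h.totalDegree_le l)

protected lemma sum {κ : Type*} {s : Finset κ} {f : κ → MvPolynomial σ k}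
    {θ : κ → σ → MvPolynomial (σ ⊕ σ) k} (h : ∀ i ∈ s, IsBezoutian (f i) D (θ i)) :
    IsBezoutian (∑ i ∈ s, f i) D (∑ i ∈ s, θ i) where
  sub_eq := by
    simp only [map_sum, Finset.sum_apply, Finset.sum_mul]
    rw [Finset.sum_comm, ← Finset.sum_sub_distrib]
    exact Finset.sum_congr rfl fun i hi => (h i hi).sub_eq
  totalDegree_le l := by
    rw [Finset.sum_apply]
    exact totalDegree_finsetSum_le fun i hi => (h i hi).totalDegree_le l

protected lemma mul (hf : IsBezoutian f D θ) (hg : IsBezoutian g D' η)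
    (hfD : f.totalDegree ≤ D) (hgD : g.totalDegree ≤ D') :
    IsBezoutian (f * g) (D + D')
      (fun l => θ l * rename Sum.inl g + rename Sum.inr f * η l) where
  sub_eq := by
    have hsum : ∑ l, (θ l * rename Sum.inl g + rename Sum.inr f * η l) *
        (X (Sum.inl l) - X (Sum.inr l)) =
        (∑ l, θ l * (X (Sum.inl l) - X (Sum.inr l))) * rename Sum.inl g +
        rename Sum.inr f * ∑ l, η l * (X (Sum.inl l) - X (Sum.inr l)) := by
      rw [Finset.sum_mul, Finset.mul_sum, ← Finset.sum_add_distrib]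
      exact Finset.sum_congr rfl fun l _ => by ring
    rw [hsum, ← hf.sub_eq, ← hg.sub_eq, map_mul, map_mul]
    ring
  totalDegree_le l := by
    refine (totalDegree_add _ _).trans (max_le ?_ ?_) <;> refine (totalDegree_mul _ _).trans ?_
    · exact add_le_add (hf.totalDegree_le l) ((totalDegree_rename_le _ g).trans hgD)
    · exact add_le_add ((totalDegree_rename_le _ f).trans hfD) (hg.totalDegree_le l)

protected lemma X [DecidableEq σ] (i : σ) :
    IsBezoutian (X i : MvPolynomial σ k) 0 (Pi.single i 1) where
  sub_eq := by
    simp only [rename_X, Pi.single_apply, ite_mul, one_mul, zero_mul, Finset.sum_ite_eq',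
      Finset.mem_univ, if_true]
  totalDegree_le l := by
    rw [Pi.single_apply]
    split_ifs <;> simp

lemma exists_of_mem_span_X (hf : f ∈ Submodule.span k (Set.range X)) :
    ∃ θ, IsBezoutian f 0 θ := by
  classical
  induction hf using Submodule.span_induction with
  | mem f hf =>
    obtain ⟨i, rfl⟩ := hf
    exact ⟨_, .X i⟩
  | zero => exact ⟨0, by simpa using IsBezoutian.const (σ := σ) (0 : k) 0⟩
  | add f g _ _ hf hg =>
    obtain ⟨θ, hθ⟩ := hf
    obtain ⟨η, hη⟩ := hg
    exact ⟨_, hθ.add hη⟩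
  | smul c f _ hf =>
    obtain ⟨θ, hθ⟩ := hf
    exact ⟨_, hθ.smul c⟩

lemma exists_monomial_one (α : σ →₀ ℕ) : ∃ θ, IsBezoutian (monomial α (1 : k)) α.degree θ := by
  classical
  have hadd (a b : σ →₀ ℕ) (ha : ∃ θ, IsBezoutian (monomial a (1 : k)) a.degree θ)
      (hb : ∃ θ, IsBezoutian (monomial b (1 : k)) b.degree θ) :
      ∃ θ, IsBezoutian (monomial (a + b) (1 : k)) (a + b).degree θ := by
    obtain ⟨θ, hθ⟩ := ha
    obtain ⟨η, hη⟩ := hb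
    have h := hθ.mul hη (totalDegree_monomial_le _ _) (totalDegree_monomial_le _ _)
    rw [monomial_mul, one_mul, ← map_add] at h
    exact ⟨_, h⟩
  induction α using Finsupp.induction_linear with
  | zero => exact ⟨0, .const 1 _⟩
  | add a b ha hb => exact hadd a b ha hb
  | single i e =>
    induction e with
    | zero => exact ⟨0, by simpa using IsBezoutian.const (σ := σ) (1 : k) 0⟩
    | succ e ih =>
      rw [Finsupp.single_add]
      exact hadd _ _ ih ⟨_, (IsBezoutian.X i).mono (Nat.zero_le _)⟩

theorem exists_of_totalDegree (f : MvPolynomial σ k) : ∃ θ, IsBezoutian f f.totalDegree θ := by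
  choose θ hθ using exists_monomial_one (k := k) (σ := σ)
  have h := IsBezoutian.sum fun α hα =>
    ((hθ α).smul (coeff α f)).mono (le_totalDegree (p := f) hα)
  simp only [smul_monomial, smul_eq_mul, mul_one, ← f.as_sum] at h
  exact ⟨_, h⟩

lemma aeval_sub_aeval (h : IsBezoutian f D θ) (ξ η : σ → A) :
    aeval ξ f - aeval η f = ∑ l, aeval (Sum.elim ξ η) (θ l) * (ξ l - η l) := by
  simpa [aeval_rename, Function.comp_def] using congrArg (aeval (Sum.elim ξ η)) h.sub_eq

lemma aeval_diagonal (h : IsBezoutian f D θ) (ξ : σ → A) (i : σ) :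
    aeval (Sum.elim ξ ξ) (θ i) = aeval ξ (pderiv i f) := by
  classical
  have hinr : pderiv (Sum.inl i) (rename Sum.inr f : MvPolynomial (σ ⊕ σ) k) = 0 :=
    pderiv_eq_zero_of_notMem_vars fun hm => by simpa using vars_rename Sum.inr f hm
  have hdiff := congrArg (fun p => aeval (Sum.elim ξ ξ) (pderiv (Sum.inl i) p)) h.sub_eq
  simp only [map_sub, map_sum, Derivation.leibniz, pderiv_rename Sum.inl_injective, aeval_rename,
    map_add, smul_eq_mul, map_mul, aeval_X, Sum.elim_inl, Sum.elim_inr, sub_self, zero_mul,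
    add_zero, hinr, sub_zero, Sum.elim_comp_inl] at hdiff
  rw [hdiff, Finset.sum_eq_single i]
  · simp
  · intro l _ hl
    simp [pderiv_X, hl]
  · simp

end IsBezoutian

end Bezoutian

lemma totalDegree_det_le {R σ ι : Type*} [CommRing R] [Fintype ι] [DecidableEq ι]
    {M : Matrix ι ι (MvPolynomial σ R)} {D : ι → ℕ} (h : ∀ i j, (M i j).totalDegree ≤ D i) :
    M.det.totalDegree ≤ ∑ i, D i := by
  rw [← Matrix.det_transpose, Matrix.det_apply']
  refine totalDegree_finsetSum_le fun τ _ => ?_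
  rw [← zsmul_eq_mul]
  refine (totalDegree_smul_le _ _).trans ((totalDegree_finsetProd _ _).trans ?_)
  exact Finset.sum_le_sum fun i _ => h _ _

section GridSums

variable {B Ω : Type*} [CommRing B] [Field Ω] [Algebra B Ω]

lemma map_nodal_id_of_mapsTo {Ω : Type*} [Field Ω] (σ : Ω ≃+* Ω) {T : Finset Ω}
    (hT : ∀ s ∈ T, σ s ∈ T) :
    (Lagrange.nodal T id).map (σ : Ω →+* Ω) = Lagrange.nodal T id := by
  classical
  have himage : T.image σ = T :=
    Finset.eq_of_subset_of_card_le (Finset.image_subset_iff.2 hT)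
      (Finset.card_image_of_injective _ σ.injective).ge
  conv_rhs => rw [Lagrange.nodal, ← himage, Finset.prod_image σ.injective.injOn]
  simp [Lagrange.nodal, Polynomial.map_prod]

lemma exists_monic_map_eq_nodal
    (descent : ∀ x : Ω, IsIntegral B x → (∀ σ : Ω ≃ₐ[B] Ω, σ x = x) → ∃ c, algebraMap B Ω c = x)
    {T : Finset Ω} (hint : ∀ s ∈ T, IsIntegral B s) (hT : ∀ σ : Ω ≃ₐ[B] Ω, ∀ s ∈ T, σ s ∈ T) :
    ∃ P : Polynomial B, P.Monic ∧ P.map (algebraMap B Ω) = Lagrange.nodal T id := by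
  have hclosure : Lagrange.nodal T id ∈ Polynomial.lifts (algebraMap (integralClosure B Ω) Ω) :=
    Subsemiring.prod_mem _ fun s hs => (Polynomial.mem_lifts _).2
      ⟨Polynomial.X - Polynomial.C ⟨s, hint s hs⟩, by simp⟩
  have hlifts : Lagrange.nodal T id ∈ Polynomial.lifts (algebraMap B Ω) := by
    rw [Polynomial.lifts_iff_coeff_lifts] at hclosure ⊢
    intro i
    obtain ⟨z, hz⟩ := hclosure i
    refine descent _ (hz ▸ z.2) fun σ => ?_
    have hσ := map_nodal_id_of_mapsTo (σ : Ω ≃+* Ω) (hT σ)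
    conv_rhs => rw [← hσ, Polynomial.coeff_map]
    rfl
  obtain ⟨P, hPmap, -, hP⟩ :=
    Polynomial.lifts_and_natDegree_eq_and_monic hlifts Lagrange.nodal_monic
  exact ⟨P, hP, hPmap⟩

lemma exists_algebraMap_eq_sum_pow_div_derivative_nodal {T : Finset Ω} {P : Polynomial B}
    (hP : P.Monic) (hPT : P.map (algebraMap B Ω) = Lagrange.nodal T id) (j : ℕ) :
    ∃ c : B, algebraMap B Ω c =
      ∑ s ∈ T, s ^ j / (Polynomial.derivative (Lagrange.nodal T id)).eval s := by
  classical
  have : Nontrivial B := (algebraMap B Ω).domain_nontrivial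
  let R := (Polynomial.X ^ j %ₘ P).map (algebraMap B Ω)
  have hR_deg : R.degree < T.card := by
    refine Polynomial.degree_map_le.trans_lt ((Polynomial.degree_modByMonic_lt _ hP).trans_eq ?_)
    rw [← hP.degree_map (algebraMap B Ω), hPT, Lagrange.degree_nodal]
  have hR_eval (s : Ω) (hs : s ∈ T) : R.eval s = s ^ j := by
    have h := congrArg (fun p => (p.map (algebraMap B Ω)).eval s)
      (Polynomial.modByMonic_add_div (Polynomial.X ^ j) P)
    simp only [Polynomial.map_add, Polynomial.map_mul, hPT, Polynomial.eval_add,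
      Polynomial.eval_mul, show (Lagrange.nodal T id).eval s = 0 from
        Lagrange.eval_nodal_at_node (v := id) hs, zero_mul, add_zero] at h
    simpa [R] using h
  refine ⟨(Polynomial.X ^ j %ₘ P).coeff (T.card - 1), ?_⟩
  rw [← Polynomial.coeff_map, Lagrange.coeff_eq_sum Function.injective_id.injOn hR_deg]
  refine Finset.sum_congr rfl fun s hs => ?_
  have hderiv := Lagrange.eval_nodal_derivative_eval_node_eq (v := (id : Ω → Ω)) hs
  rw [id] at hderiv
  rw [id, hR_eval s hs, hderiv, Lagrange.eval_nodal]

theorem exists_algebraMap_eq_sum_piFinset_div {ι : Type*} [Fintype ι] [DecidableEq ι]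
    {T : ι → Finset Ω} {P : ι → Polynomial B} (hP : ∀ l, (P l).Monic)
    (hPT : ∀ l, (P l).map (algebraMap B Ω) = Lagrange.nodal (T l) id) (F : MvPolynomial ι B) :
    ∃ c : B, algebraMap B Ω c = ∑ η ∈ Fintype.piFinset T,
      aeval η F / ∏ l, (Polynomial.derivative (Lagrange.nodal (T l) id)).eval (η l) := by
  induction F using MvPolynomial.induction_on' with
  | add F G hF hG =>
    obtain ⟨c, hc⟩ := hF
    obtain ⟨c', hc'⟩ := hG
    refine ⟨c + c', ?_⟩
    simp only [map_add, hc, hc', add_div, Finset.sum_add_distrib]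
  | monomial α a =>
    choose c hc using fun l =>
      exists_algebraMap_eq_sum_pow_div_derivative_nodal (hP l) (hPT l) (α l)
    refine ⟨a * ∏ l, c l, ?_⟩
    simp only [map_mul, map_prod, hc, Finset.prod_univ_sum, Finset.mul_sum]
    refine Finset.sum_congr rfl fun η _ => ?_
    rw [aeval_monomial, Finset.prod_div_distrib, mul_div_assoc, Finsupp.prod_fintype _ _ (by simp)]

end GridSums

section TotalDegree

variable {k σ τ : Type*} [CommRing k]

lemma totalDegree_le_one_of_mem_span_X {f : MvPolynomial σ k}
    (hf : f ∈ Submodule.span k (Set.range X)) : f.totalDegree ≤ 1 := by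
  have hle : Submodule.span k (Set.range X) ≤ restrictTotalDegree σ k 1 :=
    Submodule.span_le.2 <| by
      rintro _ ⟨i, rfl⟩
      exact (mem_restrictTotalDegree _ _ _).2 (isHomogeneous_X k i).totalDegree_le
  exact (mem_restrictTotalDegree _ _ _).1 (hle hf)

lemma totalDegree_aeval_le {ℓ : σ → MvPolynomial τ k} (hℓ : ∀ j, (ℓ j).totalDegree ≤ 1)
    (c : MvPolynomial σ k) : (aeval ℓ c).totalDegree ≤ c.totalDegree := by
  rw [aeval_def, eval₂_eq]
  refine totalDegree_finsetSum_le fun α hα => (totalDegree_mul _ _).trans ?_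
  rw [algebraMap_eq, totalDegree_C, zero_add]
  refine (totalDegree_finsetProd _ _).trans (le_trans ?_ (le_totalDegree hα))
  refine Finset.sum_le_sum fun i _ => (totalDegree_pow _ _).trans ?_
  exact (Nat.mul_le_mul_left _ (hℓ i)).trans_eq (mul_one _)

lemma totalDegree_prod_X_pow_le [Fintype σ] (e : σ → ℕ) :
    (∏ i, X i ^ e i : MvPolynomial σ k).totalDegree ≤ ∑ i, e i := by
  refine (totalDegree_finsetProd _ _).trans (Finset.sum_le_sum fun i _ => ?_)
  refine (totalDegree_pow _ _).trans ?_
  exact (Nat.mul_le_mul_left _ (isHomogeneous_X k i).totalDegree_le).trans_eq (mul_one _)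

end TotalDegree

section BaseChange

variable {k σ A : Type*} [CommRing k] [CommRing A] [Algebra k A]
  [Algebra (MvPolynomial σ k) A] [IsScalarTower k (MvPolynomial σ k) A]

lemma algebraMap_eq_aeval_algebraMap_X (c : MvPolynomial σ k) :
    algebraMap (MvPolynomial σ k) A c =
      aeval (fun j => algebraMap (MvPolynomial σ k) A (X j)) c := by
  have h := aeval_algebraMap_apply A (X : σ → MvPolynomial σ k) c
  rw [aeval_X_left_apply] at h
  exact h.symm

lemma IsIntegralOfDegree.totalDegree_le_of_injective [IsDomain k] [Nontrivial A]
    (hinj : Function.Injective (algebraMap (MvPolynomial σ k) A)) {c : MvPolynomial σ k} {D : ℕ}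
    (hc : IsIntegralOfDegree k (fun j => algebraMap (MvPolynomial σ k) A (X j)) D
      (algebraMap _ A c)) : c.totalDegree ≤ D := by
  rw [algebraMap_eq_aeval_algebraMap_X] at hc
  refine hc.totalDegree_le fun a b hab => hinj ?_
  rwa [algebraMap_eq_aeval_algebraMap_X, algebraMap_eq_aeval_algebraMap_X]

end BaseChange

namespace FiniteGenericFibre

variable {k : Type*} [Field k] {n r : ℕ} {J : Ideal (MvPolynomial (Fin n) k)}
  {Ω : Type*} [Field Ω] [Algebra k Ω] [Algebra (MvPolynomial (Fin r) k) Ω]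
  (S : FiniteGenericFibre J r Ω)

lemma mem_pts {ξ : Fin n → Ω} : ξ ∈ S.pts ↔ ξ ∈ genericFibre J S.lin Ω := by
  rw [← S.coe_pts, Finset.mem_coe]

lemma mem_iff_forall_aeval_eq_zero {f : MvPolynomial (Fin n) k} :
    f ∈ J ↔ ∀ ξ ∈ S.pts, aeval ξ f = 0 :=
  ⟨fun hf _ hξ => (S.mem_pts.1 hξ).1 f hf, S.mem_of_forall_aeval_eq_zero f⟩

lemma isIntegralOfDegree_aeval {ξ : Fin n → Ω} (hξ : ξ ∈ S.pts) (f : MvPolynomial (Fin n) k) :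
    IsIntegralOfDegree k (fun j => algebraMap (MvPolynomial (Fin r) k) Ω (X j)) f.totalDegree
      (aeval ξ f) :=
  .aeval (S.isIntegralOfDegree_coord ξ hξ) f

variable [IsScalarTower k (MvPolynomial (Fin r) k) Ω]

lemma isIntegral_aeval {ξ : Fin n → Ω} (hξ : ξ ∈ S.pts) (f : MvPolynomial (Fin n) k) :
    IsIntegral (MvPolynomial (Fin r) k) (aeval ξ f) :=
  (S.isIntegralOfDegree_aeval hξ f).isIntegral algebraMap_eq_aeval_algebraMap_X

lemma algEquiv_aeval (σ : Ω ≃ₐ[MvPolynomial (Fin r) k] Ω) (ξ : Fin n → Ω)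
    (f : MvPolynomial (Fin n) k) : σ (aeval ξ f) = aeval (fun i => σ (ξ i)) f :=
  comp_aeval_apply ξ (σ.restrictScalars k : Ω →ₐ[k] Ω) f

lemma algEquiv_mem_pts (σ : Ω ≃ₐ[MvPolynomial (Fin r) k] Ω) {ξ : Fin n → Ω} (hξ : ξ ∈ S.pts) :
    (fun i => σ (ξ i)) ∈ S.pts := by
  rw [mem_pts] at hξ ⊢
  refine ⟨fun f hf => ?_, fun j => ?_⟩
  · rw [← algEquiv_aeval, hξ.1 f hf, map_zero]
  · rw [← algEquiv_aeval, hξ.2 j, AlgEquiv.commutes]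

lemma image_algEquiv_pts [DecidableEq Ω] (σ : Ω ≃ₐ[MvPolynomial (Fin r) k] Ω) :
    S.pts.image (fun ξ i => σ (ξ i)) = S.pts :=
  Finset.eq_of_subset_of_card_le
    (Finset.image_subset_iff.2 fun _ hξ => S.algEquiv_mem_pts σ hξ)
    (Finset.card_image_of_injective _ σ.injective.comp_left).ge

lemma algEquiv_prod_aeval (σ : Ω ≃ₐ[MvPolynomial (Fin r) k] Ω) (f : MvPolynomial (Fin n) k) :
    σ (∏ ξ ∈ S.pts, aeval ξ f) = ∏ ξ ∈ S.pts, aeval ξ f := by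
  classical
  have hinj : Set.InjOn (fun (ξ : Fin n → Ω) i => σ (ξ i)) S.pts := σ.injective.comp_left.injOn
  conv_rhs => rw [← S.image_algEquiv_pts σ, Finset.prod_image hinj]
  simp only [map_prod, algEquiv_aeval]

lemma algEquiv_sum_aeval (σ : Ω ≃ₐ[MvPolynomial (Fin r) k] Ω) (f : MvPolynomial (Fin n) k) :
    σ (∑ ξ ∈ S.pts, aeval ξ f) = ∑ ξ ∈ S.pts, aeval ξ f := by
  classical
  have hinj : Set.InjOn (fun (ξ : Fin n → Ω) i => σ (ξ i)) S.pts := σ.injective.comp_left.injOn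
  conv_rhs => rw [← S.image_algEquiv_pts σ, Finset.sum_image hinj]
  simp only [map_sum, algEquiv_aeval]

lemma exists_algebraMap_eq_prod_aeval (f : MvPolynomial (Fin n) k) :
    ∃ c : MvPolynomial (Fin r) k, algebraMap _ Ω c = ∏ ξ ∈ S.pts, aeval ξ f :=
  S.descent _ (.prod _ fun _ hξ => S.isIntegral_aeval hξ f) fun σ => S.algEquiv_prod_aeval σ f

lemma aeval_aeval_lin {ξ : Fin n → Ω} (hξ : ξ ∈ S.pts) (c : MvPolynomial (Fin r) k) :
    aeval ξ (aeval S.lin c) = algebraMap (MvPolynomial (Fin r) k) Ω c :=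
  aeval_aeval_of_mem_genericFibre (S.mem_pts.1 hξ) c

lemma aeval_eval₂_lin {ξ : Fin n → Ω} (hξ : ξ ∈ S.pts) (P : Polynomial (MvPolynomial (Fin r) k))
    (f : MvPolynomial (Fin n) k) :
    aeval ξ (P.eval₂ (aeval (R := k) S.lin).toRingHom f) = Polynomial.aeval (aeval ξ f) P := by
  have hcomp : ((aeval ξ : _ →ₐ[k] Ω) : _ →+* Ω).comp (aeval (R := k) S.lin).toRingHom =
      algebraMap (MvPolynomial (Fin r) k) Ω := RingHom.ext fun c => S.aeval_aeval_lin hξ c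
  rw [← AlgHom.coe_toRingHom, Polynomial.hom_eval₂, hcomp]
  rfl

lemma exists_monic_map_eq_nodal_image [DecidableEq Ω] {Z : Finset (Fin n → Ω)} (hZ : Z ⊆ S.pts)
    (hZσ : ∀ σ : Ω ≃ₐ[MvPolynomial (Fin r) k] Ω, ∀ ξ ∈ Z, (fun i => σ (ξ i)) ∈ Z)
    (f : MvPolynomial (Fin n) k) :
    ∃ P : Polynomial (MvPolynomial (Fin r) k), P.Monic ∧
      P.map (algebraMap _ Ω) = Lagrange.nodal (Z.image fun ξ => aeval ξ f) id := by
  refine exists_monic_map_eq_nodal S.descent ?_ fun σ => ?_ <;>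
    refine Finset.forall_mem_image.2 fun ξ hξ => ?_
  · exact S.isIntegral_aeval (hZ hξ) f
  · rw [algEquiv_aeval]
    exact Finset.mem_image_of_mem _ (hZσ σ ξ hξ)

lemma aeval_ne_zero_of_forall_mul_mem {p : MvPolynomial (Fin n) k} (hp : ∀ a, p * a ∈ J → a ∈ J)
    {ξ : Fin n → Ω} (hξ : ξ ∈ S.pts) : aeval ξ p ≠ 0 := by
  classical
  let Z := S.pts.filter fun ξ => aeval ξ p ≠ 0
  obtain ⟨P, -, hP⟩ := S.exists_monic_map_eq_nodal_image (Finset.filter_subset _ _ : Z ⊆ S.pts)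
    (fun σ η hη => by
      obtain ⟨hηS, hη0⟩ := Finset.mem_filter.1 hη
      refine Finset.mem_filter.2 ⟨S.algEquiv_mem_pts σ hηS, ?_⟩
      rwa [← algEquiv_aeval, map_ne_zero]) p
  -- `a` vanishes at exactly those points of the fibre where `p` does not.
  let a := P.eval₂ (aeval (R := k) S.lin).toRingHom p
  have ha (η) (hη : η ∈ S.pts) :
      aeval η a = ∏ s ∈ Z.image fun ξ => aeval ξ p, (aeval η p - s) := by
    rw [S.aeval_eval₂_lin hη, ← Polynomial.eval_map_algebraMap, hP, Lagrange.eval_nodal]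
    rfl
  have hpa : p * a ∈ J := by
    refine S.mem_of_forall_aeval_eq_zero _ fun η hη => ?_
    rw [map_mul, ha η hη, mul_eq_zero, or_iff_not_imp_left]
    exact fun hη0 => Finset.prod_eq_zero
      (Finset.mem_image_of_mem _ (Finset.mem_filter.2 ⟨hη, hη0⟩)) (sub_self _)
  have haξ : aeval ξ a = 0 := S.mem_iff_forall_aeval_eq_zero.1 (hp a hpa) ξ hξ
  rw [ha ξ hξ, Finset.prod_eq_zero_iff] at haξ
  obtain ⟨s, hs, hξs⟩ := haξ
  obtain ⟨η, hη, rfl⟩ := Finset.mem_image.1 hs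
  rw [sub_eq_zero.1 hξs]
  exact (Finset.mem_filter.1 hη).2

theorem totalDegree_le_of_algebraMap_eq_sum_div {h u : MvPolynomial (Fin n) k}
    (hu : ∀ ξ ∈ S.pts, aeval ξ u ≠ 0) {c : MvPolynomial (Fin r) k}
    (hc : algebraMap _ Ω c = ∑ ξ ∈ S.pts, aeval ξ h / aeval ξ u) :
    c.totalDegree ≤ h.totalDegree + (S.pts.card - 1) * u.totalDegree := by
  classical
  rcases eq_or_ne c 0 with rfl | hc0
  · simp
  obtain ⟨μ, hμ⟩ := S.exists_algebraMap_eq_prod_aeval u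
  have hμ0 : μ ≠ 0 := by
    rintro rfl
    exact Finset.prod_ne_zero_iff.2 hu (hμ.symm.trans (map_zero _))
  have hcμ : algebraMap _ Ω (c * μ) =
      ∑ ξ ∈ S.pts, aeval ξ h * ∏ η ∈ S.pts.erase ξ, aeval η u := by
    rw [map_mul, hc, hμ, Finset.sum_mul]
    refine Finset.sum_congr rfl fun ξ hξ => ?_
    rw [← Finset.mul_prod_erase _ _ hξ, ← mul_assoc, div_mul_cancel₀ _ (hu ξ hξ)]
  have hdeg : (c * μ).totalDegree ≤ h.totalDegree + (S.pts.card - 1) * u.totalDegree := by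
    refine IsIntegralOfDegree.totalDegree_le_of_injective S.injective ?_
    rw [hcμ]
    refine .sum fun ξ hξ => (S.isIntegralOfDegree_aeval hξ h).mul ?_
    rw [← Finset.card_erase_of_mem hξ, ← smul_eq_mul, ← Finset.sum_const]
    exact .prod fun η hη => S.isIntegralOfDegree_aeval (Finset.mem_of_mem_erase hη) u
  exact (totalDegree_mul_of_isDomain hc0 hμ0 ▸ Nat.le_add_right _ _).trans hdeg

end FiniteGenericFibre

section Residue

lemma aeval_polynomialAeval_X {B Ω ι : Type*} [CommRing B] [CommRing Ω] [Algebra B Ω]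
    (η : ι → Ω) (l : ι) (P : Polynomial B) :
    aeval η (Polynomial.aeval (X l : MvPolynomial ι B) P) = Polynomial.aeval (η l) P := by
  rw [← Polynomial.aeval_algHom_apply, aeval_X]

/-- The determinant of the Jacobian matrix `∂Qⱼ/∂xᵢ` of a square system of polynomials. -/
noncomputable def jacobianDet {B ι : Type*} [CommRing B] [Fintype ι] [DecidableEq ι]
    (Q : ι → MvPolynomial ι B) : MvPolynomial ι B :=
  (Matrix.of fun j i => pderiv i (Q j)).det

variable {B Ω ι : Type*} [CommRing B] [Field Ω] [Algebra B Ω] [Fintype ι] [DecidableEq ι]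
  {Q : ι → MvPolynomial ι B} {P : ι → Polynomial B} {c : ι → ι → MvPolynomial ι B}

lemma prod_aeval_derivative_eq_det_mul_jacobianDet
    (hc : ∀ l, ∑ j, c l j * Q j = Polynomial.aeval (X l) (P l)) {ξ : ι → Ω}
    (hξ : ∀ j, aeval ξ (Q j) = 0) :
    ∏ l, Polynomial.aeval (ξ l) (Polynomial.derivative (P l)) =
      aeval ξ (Matrix.of c).det * aeval ξ (jacobianDet Q) := by
  rw [jacobianDet, AlgHom.map_det, AlgHom.map_det, ← Matrix.det_mul, ← Matrix.det_diagonal]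
  congr 1
  ext l i
  have hderiv := congrArg (fun p => aeval ξ (pderiv i p)) (hc l)
  simp only [map_sum, Derivation.leibniz, smul_eq_mul, map_add, map_mul, hξ, zero_mul, add_zero,
    Derivation.map_aeval, aeval_polynomialAeval_X, pderiv_X] at hderiv
  simp only [Matrix.mul_apply, Matrix.diagonal_apply, AlgHom.mapMatrix_apply, Matrix.map_apply,
    Matrix.of_apply, hderiv]
  rcases eq_or_ne l i with rfl | hli
  · simp
  · simp [hli]

lemma aeval_det_eq_zero_of_forall_sum_mul_eq_zero {η : ι → Ω}
    (hc : ∀ l, aeval η (∑ j, c l j * Q j) = 0) (hQ : ∃ j, aeval η (Q j) ≠ 0) :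
    aeval η (Matrix.of c).det = 0 := by
  rw [AlgHom.map_det]
  refine Matrix.exists_mulVec_eq_zero_iff.1 ⟨fun j => aeval η (Q j), ?_, ?_⟩
  · exact Function.ne_iff.2 hQ
  · funext l
    simpa [Matrix.mulVec, dotProduct] using hc l

lemma aeval_derivative_ne_zero_of_map_eq_nodal {P : Polynomial B} {T : Finset Ω}
    (hPT : P.map (algebraMap B Ω) = Lagrange.nodal T id) {s : Ω} (hs : s ∈ T) :
    Polynomial.aeval s (Polynomial.derivative P) ≠ 0 := by
  classical
  have hderiv := Lagrange.eval_nodal_derivative_eval_node_eq (v := (id : Ω → Ω)) hs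
  rw [id] at hderiv
  rw [← Polynomial.eval_map_algebraMap, ← Polynomial.derivative_map, hPT, hderiv,
    Lagrange.eval_nodal, Finset.prod_ne_zero_iff]
  exact fun t ht => sub_ne_zero.2 (Finset.ne_of_mem_erase ht).symm

variable [DecidableEq Ω] {Z : Finset (ι → Ω)}

lemma jacobianDet_ne_zero_of_nodal_mem_span
    (hZ : ∀ ξ ∈ Z, ∀ j, aeval ξ (Q j) = 0)
    (hPZ : ∀ l, (P l).map (algebraMap B Ω) = Lagrange.nodal (Z.image fun ξ => ξ l) id)
    (hPQ : ∀ l, Polynomial.aeval (X l) (P l) ∈ Ideal.span (Set.range Q))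
    {ξ : ι → Ω} (hξ : ξ ∈ Z) : aeval ξ (jacobianDet Q) ≠ 0 := by
  choose c hc using fun l => Ideal.mem_span_range_iff_exists_fun.1 (hPQ l)
  have hprod : ∏ l, Polynomial.aeval (ξ l) (Polynomial.derivative (P l)) ≠ 0 :=
    Finset.prod_ne_zero_iff.2 fun l _ => aeval_derivative_ne_zero_of_map_eq_nodal (hPZ l)
      (Finset.mem_image_of_mem (fun ξ : ι → Ω => ξ l) hξ)
  rw [prod_aeval_derivative_eq_det_mul_jacobianDet hc (hZ ξ hξ)] at hprod
  exact right_ne_zero_of_mul hprod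

/-- The sum of residues of `F` over the zeros of a square system: the transformation law replaces
the system by the separated one `P₁(x₁), …, Pₙ(xₙ)`, whose zeros form a grid. -/
theorem exists_algebraMap_eq_sum_div_jacobianDet
    (hZ : ∀ ξ, ξ ∈ Z ↔ ∀ j, aeval ξ (Q j) = 0) (hP : ∀ l, (P l).Monic)
    (hPZ : ∀ l, (P l).map (algebraMap B Ω) = Lagrange.nodal (Z.image fun ξ => ξ l) id)
    (hPQ : ∀ l, Polynomial.aeval (X l) (P l) ∈ Ideal.span (Set.range Q)) (F : MvPolynomial ι B) :
    ∃ τ : B, algebraMap B Ω τ = ∑ ξ ∈ Z, aeval ξ F / aeval ξ (jacobianDet Q) := by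
  choose c hc using fun l => Ideal.mem_span_range_iff_exists_fun.1 (hPQ l)
  obtain ⟨τ, hτ⟩ := exists_algebraMap_eq_sum_piFinset_div hP hPZ (F * (Matrix.of c).det)
  refine ⟨τ, hτ.trans (Finset.sum_subset_zero_on_sdiff ?_ ?_ ?_).symm⟩
  · exact fun ξ hξ => Fintype.mem_piFinset.2 fun l =>
      Finset.mem_image_of_mem (fun ξ : ι → Ω => ξ l) hξ
  · intro η hη
    obtain ⟨hη_grid, hηZ⟩ := Finset.mem_sdiff.1 hη
    have hroot (l : ι) : aeval η (∑ j, c l j * Q j) = 0 := by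
      rw [hc l, aeval_polynomialAeval_X, ← Polynomial.eval_map_algebraMap, hPZ]
      exact Lagrange.eval_nodal_at_node (v := id) (Fintype.mem_piFinset.1 hη_grid l)
    rw [hZ, not_forall] at hηZ
    rw [map_mul, aeval_det_eq_zero_of_forall_sum_mul_eq_zero hroot hηZ, mul_zero, zero_div]
  · intro ξ hξ
    have hprod := prod_aeval_derivative_eq_det_mul_jacobianDet hc ((hZ ξ).1 hξ)
    have hprod0 : ∏ l, Polynomial.aeval (ξ l) (Polynomial.derivative (P l)) ≠ 0 :=
      Finset.prod_ne_zero_iff.2 fun l _ => aeval_derivative_ne_zero_of_map_eq_nodal (hPZ l)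
        (Finset.mem_image_of_mem (fun ξ : ι → Ω => ξ l) hξ)
    simp only [← hPZ, Polynomial.derivative_map, Polynomial.eval_map_algebraMap, hprod, map_mul]
    rw [hprod] at hprod0
    rw [mul_comm, mul_div_mul_left _ _ (left_ne_zero_of_mul hprod0)]

end Residue

section BezoutianDet

variable {k ι : Type*} [CommRing k] [Fintype ι] [DecidableEq ι] {f : ι → MvPolynomial ι k}
  {D : ι → ℕ} {θ : ι → ι → MvPolynomial (ι ⊕ ι) k}

lemma aeval_diagonal_det_bezoutian {A : Type*} [CommRing A] [Algebra k A]
    (hθ : ∀ j, IsBezoutian (f j) (D j) (θ j)) (ξ : ι → A) :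
    aeval (Sum.elim ξ ξ) (Matrix.of θ).det = aeval ξ (jacobianDet f) := by
  rw [jacobianDet, AlgHom.map_det, AlgHom.map_det]
  congr 1
  ext j i
  exact (hθ j).aeval_diagonal ξ i

lemma aeval_det_bezoutian_eq_zero {A : Type*} [CommRing A] [IsDomain A] [Algebra k A]
    (hθ : ∀ j, IsBezoutian (f j) (D j) (θ j)) {ξ η : ι → A} (hne : ξ ≠ η)
    (hf : ∀ j, aeval ξ (f j) = aeval η (f j)) :
    aeval (Sum.elim ξ η) (Matrix.of θ).det = 0 := by
  rw [AlgHom.map_det]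
  refine Matrix.exists_mulVec_eq_zero_iff.1 ⟨fun l => ξ l - η l, sub_ne_zero.2 hne, ?_⟩
  funext j
  exact ((hθ j).aeval_sub_aeval ξ η).symm.trans (sub_eq_zero.2 (hf j))

lemma totalDegree_jacobianDet_le (hθ : ∀ j, IsBezoutian (f j) (D j) (θ j)) :
    (jacobianDet f).totalDegree ≤ ∑ j, D j := by
  have hdiag := aeval_diagonal_det_bezoutian hθ (X : ι → MvPolynomial ι k)
  rw [aeval_X_left_apply] at hdiag
  rw [← hdiag]
  have hX (i : ι ⊕ ι) : (Sum.elim X X i : MvPolynomial ι k).totalDegree ≤ 1 := by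
    rcases i with i | i <;> exact (isHomogeneous_X k i).totalDegree_le
  exact (totalDegree_aeval_le hX _).trans (totalDegree_det_le fun j => (hθ j).totalDegree_le)

end BezoutianDet

section Division

variable {k : Type*} [Field k] {n r : ℕ} {J : Ideal (MvPolynomial (Fin n) k)}

/-- The equation `fⱼ(x) = bⱼ(y)` of a fibre of `f`, with coefficients in `k[y]`. -/
noncomputable def fibreEquation (f : Fin n → MvPolynomial (Fin n) k)
    (b : Fin n → MvPolynomial (Fin r) k) (j : Fin n) :
    MvPolynomial (Fin n) (MvPolynomial (Fin r) k) :=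
  map (algebraMap k (MvPolynomial (Fin r) k)) (f j) - C (b j)

lemma jacobianDet_fibreEquation (f : Fin n → MvPolynomial (Fin n) k)
    (b : Fin n → MvPolynomial (Fin r) k) :
    jacobianDet (fibreEquation f b) =
      map (algebraMap k (MvPolynomial (Fin r) k)) (jacobianDet f) := by
  rw [jacobianDet, jacobianDet, RingHom.map_det]
  congr 1
  ext1 j i
  simp [fibreEquation, pderiv_map]

lemma map_eval₂Hom_sub_mem {ℓ : Fin r → MvPolynomial (Fin n) k}
    {I : Ideal (MvPolynomial (Fin n) (MvPolynomial (Fin r) k))}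
    (hℓ : ∀ j, map (algebraMap k (MvPolynomial (Fin r) k)) (ℓ j) - C (X j) ∈ I)
    (F : MvPolynomial (Fin n) (MvPolynomial (Fin r) k)) :
    map (algebraMap k (MvPolynomial (Fin r) k))
      (eval₂Hom (aeval (R := k) ℓ).toRingHom X F) - F ∈ I := by
  have hC : (((Ideal.Quotient.mk I).comp (map (algebraMap k (MvPolynomial (Fin r) k)))).comp
      (eval₂Hom (aeval (R := k) ℓ).toRingHom X)).comp C = (Ideal.Quotient.mk I).comp C := by
    refine ringHom_ext (fun c => ?_) fun j => ?_
    · simp [algebraMap_eq]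
    · simpa [Ideal.Quotient.eq] using hℓ j
  have hmk : ((Ideal.Quotient.mk I).comp (map (algebraMap k (MvPolynomial (Fin r) k)))).comp
      (eval₂Hom (aeval (R := k) ℓ).toRingHom X) = Ideal.Quotient.mk I :=
    ringHom_ext (fun c => DFunLike.congr_fun hC c) fun i => by simp
  exact Ideal.Quotient.eq.1 (DFunLike.congr_fun hmk F)

namespace FiniteGenericFibre

variable {Ω : Type*} [Field Ω] [Algebra k Ω] [Algebra (MvPolynomial (Fin r) k) Ω]

/-- The square system `f(x) = b(y)` generates the ideal of the generic fibre, that is the ideal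
generated by `J` and the polynomials `linⱼ(x) - yⱼ`. -/
structure IsCutOutBy (S : FiniteGenericFibre J r Ω) (f : Fin n → MvPolynomial (Fin n) k)
    (b : Fin n → MvPolynomial (Fin r) k) : Prop where
  map_mem_span : ∀ p ∈ J,
    map (algebraMap k (MvPolynomial (Fin r) k)) p ∈ Ideal.span (Set.range (fibreEquation f b))
  lin_sub_mem_span : ∀ j, map (algebraMap k (MvPolynomial (Fin r) k)) (S.lin j) - C (X j) ∈
    Ideal.span (Set.range (fibreEquation f b))
  aeval_eq : ∀ ξ ∈ S.pts, ∀ j, aeval ξ (f j) = algebraMap (MvPolynomial (Fin r) k) Ω (b j)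

lemma isCutOutBy_sumElim {m : ℕ} {q : Fin m → MvPolynomial (Fin n) k}
    (S : FiniteGenericFibre (Ideal.span (Set.range q)) r Ω) (e : Fin n ≃ Fin m ⊕ Fin r) :
    S.IsCutOutBy (Sum.elim q S.lin ∘ e) (Sum.elim 0 X ∘ e) where
  map_mem_span p hp := by
    have hle : Ideal.span (Set.range q) ≤
        (Ideal.span (Set.range (fibreEquation (Sum.elim q S.lin ∘ e) (Sum.elim 0 X ∘ e)))).comap
          (map (algebraMap k (MvPolynomial (Fin r) k))) :=
      Ideal.span_le.2 (Set.range_subset_iff.2 fun i =>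
        Ideal.subset_span ⟨e.symm (Sum.inl i), by simp [fibreEquation]⟩)
    exact hle hp
  lin_sub_mem_span j := Ideal.subset_span ⟨e.symm (Sum.inr j), by simp [fibreEquation]⟩
  aeval_eq ξ hξ j := by
    simp only [Function.comp_apply]
    rcases e j with i | i
    · simpa using (S.mem_pts.1 hξ).1 _ (Ideal.subset_span ⟨i, rfl⟩)
    · exact (S.mem_pts.1 hξ).2 i

variable [IsScalarTower k (MvPolynomial (Fin r) k) Ω] (S : FiniteGenericFibre J r Ω)

lemma aeval_eval₂Hom_lin {ξ : Fin n → Ω} (hξ : ξ ∈ S.pts)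
    (F : MvPolynomial (Fin n) (MvPolynomial (Fin r) k)) :
    aeval ξ (eval₂Hom (aeval (R := k) S.lin).toRingHom X F) = aeval ξ F := by
  have hcomp : (aeval (R := k) ξ).toRingHom.comp
      (eval₂Hom (aeval (R := k) S.lin).toRingHom X) =
        (aeval (R := MvPolynomial (Fin r) k) ξ).toRingHom := by
    refine ringHom_ext (fun c => ?_) fun i => ?_
    · simpa using S.aeval_aeval_lin hξ c
    · simp
  exact DFunLike.congr_fun hcomp F

namespace IsCutOutBy

variable {S} {f : Fin n → MvPolynomial (Fin n) k} {b : Fin n → MvPolynomial (Fin r) k}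

lemma mem_span_of_forall_aeval_eq_zero (h : S.IsCutOutBy f b)
    {F : MvPolynomial (Fin n) (MvPolynomial (Fin r) k)} (hF : ∀ ξ ∈ S.pts, aeval ξ F = 0) :
    F ∈ Ideal.span (Set.range (fibreEquation f b)) := by
  refine (Submodule.sub_mem_iff_right _ (h.map_mem_span _ ?_)).1
    (map_eval₂Hom_sub_mem h.lin_sub_mem_span F)
  refine S.mem_of_forall_aeval_eq_zero _ fun ξ hξ => ?_
  rw [S.aeval_eval₂Hom_lin hξ, hF ξ hξ]

lemma mem_pts_iff (h : S.IsCutOutBy f b) (ξ : Fin n → Ω) :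
    ξ ∈ S.pts ↔ ∀ j, aeval ξ (fibreEquation f b j) = 0 := by
  refine ⟨fun hξ j => ?_, fun hξ => S.mem_pts.2 ⟨fun p hp => ?_, fun j => ?_⟩⟩
  · rw [fibreEquation, map_sub, aeval_map_algebraMap, h.aeval_eq ξ hξ j, aeval_C, sub_self]
  all_goals
    have hker : Ideal.span (Set.range (fibreEquation f b)) ≤
        RingHom.ker (aeval (R := MvPolynomial (Fin r) k) ξ) :=
      Ideal.span_le.2 (Set.range_subset_iff.2 hξ)
  · simpa only [RingHom.mem_ker, aeval_map_algebraMap] using hker (h.map_mem_span p hp)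
  · simpa only [RingHom.mem_ker, map_sub, aeval_map_algebraMap, aeval_C, sub_eq_zero] using
      hker (h.lin_sub_mem_span j)

lemma exists_nodal_mem_span [DecidableEq Ω] (h : S.IsCutOutBy f b) (l : Fin n) :
    ∃ P : Polynomial (MvPolynomial (Fin r) k), P.Monic ∧
      P.map (algebraMap _ Ω) = Lagrange.nodal (S.pts.image fun ξ => ξ l) id ∧
      Polynomial.aeval (X l) P ∈ Ideal.span (Set.range (fibreEquation f b)) := by
  obtain ⟨P, hP, hPZ⟩ := S.exists_monic_map_eq_nodal_image subset_rfl
    (fun σ ξ hξ => S.algEquiv_mem_pts σ hξ) (X l)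
  simp only [aeval_X] at hPZ
  refine ⟨P, hP, hPZ, h.mem_span_of_forall_aeval_eq_zero fun ξ hξ => ?_⟩
  rw [aeval_polynomialAeval_X, ← Polynomial.eval_map_algebraMap, hPZ]
  exact Lagrange.eval_nodal_at_node (v := id) (Finset.mem_image_of_mem (fun ξ => ξ l) hξ)

lemma aeval_jacobianDet_ne_zero (h : S.IsCutOutBy f b) {ξ : Fin n → Ω} (hξ : ξ ∈ S.pts) :
    aeval ξ (jacobianDet f) ≠ 0 := by
  classical
  choose P _ hPZ hPQ using h.exists_nodal_mem_span
  have hjac := jacobianDet_ne_zero_of_nodal_mem_span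
    (fun η hη => (h.mem_pts_iff η).1 hη) hPZ hPQ hξ
  rwa [jacobianDet_fibreEquation, aeval_map_algebraMap] at hjac

lemma exists_algebraMap_eq_sum_div (h : S.IsCutOutBy f b) (F : MvPolynomial (Fin n) k) :
    ∃ τ : MvPolynomial (Fin r) k,
      algebraMap _ Ω τ = ∑ ξ ∈ S.pts, aeval ξ F / aeval ξ (jacobianDet f) := by
  classical
  choose P hP hPZ hPQ using h.exists_nodal_mem_span
  simpa only [jacobianDet_fibreEquation, aeval_map_algebraMap] using
    exists_algebraMap_eq_sum_div_jacobianDet h.mem_pts_iff hP hPZ hPQ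
      (map (algebraMap k (MvPolynomial (Fin r) k)) F)

end IsCutOutBy

lemma exists_aeval_eq_sum_mul_aeval_sumElim {w : (Fin n → Ω) → Ω} {N : ℕ}
    (hw : ∀ e : Fin n → ℕ, ∃ τ : MvPolynomial (Fin r) k,
      algebraMap _ Ω τ = ∑ ξ ∈ S.pts, w ξ * ∏ i, ξ i ^ e i ∧ τ.totalDegree ≤ N + ∑ i, e i)
    (Δ : MvPolynomial (Fin n ⊕ Fin n) k) :
    ∃ a : MvPolynomial (Fin n) k,
      (∀ η ∈ S.pts, aeval η a = ∑ ξ ∈ S.pts, w ξ * aeval (Sum.elim η ξ) Δ) ∧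
      a.totalDegree ≤ N + Δ.totalDegree := by
  choose τ hτ hτdeg using hw
  refine ⟨∑ γ ∈ Δ.support, C (coeff γ Δ) * (∏ i, X i ^ γ (Sum.inl i)) *
    aeval S.lin (τ fun i => γ (Sum.inr i)), fun η hη => ?_, ?_⟩
  · simp only [aeval_def (Sum.elim η _), eval₂_eq', map_sum, map_mul, S.aeval_aeval_lin hη, hτ,
      Finset.mul_sum]
    rw [Finset.sum_comm]
    refine Finset.sum_congr rfl fun ξ _ => Finset.sum_congr rfl fun γ _ => ?_
    simp only [map_prod, map_pow, aeval_X, aeval_C, Fintype.prod_sum_type, Sum.elim_inl,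
      Sum.elim_inr]
    ring
  · refine totalDegree_finsetSum_le fun γ hγ => ?_
    have hγdeg := le_totalDegree hγ
    rw [Finsupp.sum_fintype _ _ fun _ => rfl, Fintype.sum_sum_type] at hγdeg
    have hmonomial : (C (coeff γ Δ) * ∏ i, X i ^ γ (Sum.inl i) :
        MvPolynomial (Fin n) k).totalDegree ≤ ∑ i, γ (Sum.inl i) :=
      (totalDegree_mul _ _).trans (by
        rw [totalDegree_C, zero_add]
        exact totalDegree_prod_X_pow_le _)
    have hlin := (totalDegree_aeval_le (fun j => totalDegree_le_one_of_mem_span_X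
      (S.lin_mem_span j)) (τ fun i => γ (Sum.inr i))).trans (hτdeg _)
    exact (totalDegree_mul _ _).trans ((add_le_add hmonomial hlin).trans (by omega))

namespace IsCutOutBy

variable {S} {f : Fin n → MvPolynomial (Fin n) k} {b : Fin n → MvPolynomial (Fin r) k}
  {D : Fin n → ℕ} {θ : Fin n → Fin n → MvPolynomial (Fin n ⊕ Fin n) k}
  {p g a : MvPolynomial (Fin n) k}

lemma exists_algebraMap_eq_sum_div_mul_prod (h : S.IsCutOutBy f b)
    (hθ : ∀ j, IsBezoutian (f j) (D j) (θ j)) (hp : ∀ a, p * a ∈ J → a ∈ J)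
    (hg : g - a * p ∈ J) (e : Fin n → ℕ) :
    ∃ τ : MvPolynomial (Fin r) k,
      algebraMap _ Ω τ = ∑ ξ ∈ S.pts, aeval ξ a / aeval ξ (jacobianDet f) * ∏ i, ξ i ^ e i ∧
      τ.totalDegree ≤ g.totalDegree + (S.pts.card - 1) * (p.totalDegree + ∑ j, D j) +
        ∑ i, e i := by
  obtain ⟨τ, hτ⟩ := h.exists_algebraMap_eq_sum_div (a * ∏ i, X i ^ e i)
  refine ⟨τ, hτ.trans (Finset.sum_congr rfl fun ξ _ => ?_), ?_⟩
  · simp [div_mul_eq_mul_div]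
  have hp0 (ξ) (hξ : ξ ∈ S.pts) : aeval ξ p ≠ 0 := S.aeval_ne_zero_of_forall_mul_mem hp hξ
  have hag (ξ) (hξ : ξ ∈ S.pts) : aeval ξ g = aeval ξ a * aeval ξ p := by
    simpa [sub_eq_zero] using S.mem_iff_forall_aeval_eq_zero.1 hg ξ hξ
  -- Writing `a = g / p` on the fibre makes the degree bound depend on `g` and not on `a`.
  have hτg : algebraMap _ Ω τ = ∑ ξ ∈ S.pts,
      aeval ξ (g * ∏ i, X i ^ e i) / aeval ξ (p * jacobianDet f) := by
    refine hτ.trans (Finset.sum_congr rfl fun ξ hξ => ?_)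
    rw [map_mul, map_mul, map_mul, hag ξ hξ, mul_comm (aeval ξ a) (aeval ξ p), mul_assoc,
      mul_div_mul_left _ _ (hp0 ξ hξ)]
  calc τ.totalDegree
    _ ≤ (g * ∏ i, X i ^ e i).totalDegree +
        (S.pts.card - 1) * (p * jacobianDet f).totalDegree :=
      S.totalDegree_le_of_algebraMap_eq_sum_div (fun ξ hξ => by
        rw [map_mul]
        exact mul_ne_zero (hp0 ξ hξ) (h.aeval_jacobianDet_ne_zero hξ)) hτg
    _ ≤ (g.totalDegree + ∑ i, e i) + (S.pts.card - 1) * (p.totalDegree + ∑ j, D j) := by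
      gcongr
      · exact (totalDegree_mul _ _).trans (by grw [totalDegree_prod_X_pow_le])
      · exact (totalDegree_mul _ _).trans (by grw [totalDegree_jacobianDet_le hθ])
    _ = _ := by ring

/-- The Bezoutian determinant is a reproducing kernel for the residue pairing on the fibre, so
`a` may be replaced modulo `J` by the polynomial it reproduces. -/
theorem exists_sub_mem_totalDegree_le (h : S.IsCutOutBy f b)
    (hθ : ∀ j, IsBezoutian (f j) (D j) (θ j)) (hp : ∀ a, p * a ∈ J → a ∈ J)
    (hg : g - a * p ∈ J) :
    ∃ a', a' - a ∈ J ∧ a'.totalDegree ≤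
      g.totalDegree + (S.pts.card - 1) * (p.totalDegree + ∑ j, D j) + ∑ j, D j := by
  obtain ⟨a', ha', ha'deg⟩ := S.exists_aeval_eq_sum_mul_aeval_sumElim
    (h.exists_algebraMap_eq_sum_div_mul_prod hθ hp hg) (Matrix.of θ).det
  refine ⟨a', S.mem_of_forall_aeval_eq_zero _ fun η hη => ?_, ha'deg.trans ?_⟩
  · rw [map_sub, sub_eq_zero, ha' η hη, Finset.sum_eq_single_of_mem η hη,
      aeval_diagonal_det_bezoutian hθ, div_mul_cancel₀ _ (h.aeval_jacobianDet_ne_zero hη)]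
    intro ξ hξ hne
    rw [aeval_det_bezoutian_eq_zero hθ hne.symm fun j => by
      rw [h.aeval_eq η hη, h.aeval_eq ξ hξ], mul_zero]
  · gcongr
    exact totalDegree_det_le fun j => (hθ j).totalDegree_le

end IsCutOutBy

theorem exists_sub_mem_totalDegree_le_of_span_range {m d : ℕ}
    {q : Fin m → MvPolynomial (Fin n) k} (hmr : m + r = n)
    (S : FiniteGenericFibre (Ideal.span (Set.range q)) r Ω) (hq : ∀ i, (q i).totalDegree ≤ d)
    {p g a : MvPolynomial (Fin n) k} (hpd : p.totalDegree ≤ d)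
    (hp : ∀ a, p * a ∈ Ideal.span (Set.range q) → a ∈ Ideal.span (Set.range q))
    (hg : g - a * p ∈ Ideal.span (Set.range q)) :
    ∃ a', a' - a ∈ Ideal.span (Set.range q) ∧
      a'.totalDegree ≤ g.totalDegree + (S.pts.card - 1) * (d + m * d) + m * d := by
  let e : Fin n ≃ Fin m ⊕ Fin r := (finCongr hmr.symm).trans finSumFinEquiv.symm
  let D : Fin n → ℕ := Sum.elim (fun _ => d) 0 ∘ e
  have hbez (j : Fin n) : ∃ θ, IsBezoutian ((Sum.elim q S.lin ∘ e) j) (D j) θ := by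
    simp only [D, Function.comp_apply]
    rcases e j with i | i
    · obtain ⟨θ, hθ⟩ := IsBezoutian.exists_of_totalDegree (q i)
      exact ⟨θ, hθ.mono (hq i)⟩
    · exact IsBezoutian.exists_of_mem_span_X (S.lin_mem_span i)
  have hsum : ∑ j, D j = m * d := by
    refine (Equiv.sum_comp e (Sum.elim (fun _ => d) 0)).trans ?_
    simp [Fintype.sum_sum_type]
  choose θ hθ using hbez
  obtain ⟨a', ha', hdeg⟩ := (S.isCutOutBy_sumElim e).exists_sub_mem_totalDegree_le hθ hp hg
  refine ⟨a', ha', hdeg.trans ?_⟩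
  rw [hsum]
  gcongr

end FiniteGenericFibre

end Division

section EventuallyPolynomial

/-- The function `h` agrees with a rational polynomial at all large arguments. -/
def IsEventuallyPolynomial (h : ℕ → ℕ) : Prop :=
  ∃ P : Polynomial ℚ, ∀ᶠ m : ℕ in Filter.atTop, (h m : ℚ) = P.eval (m : ℚ)

lemma exists_eval_add_one_eq_eval_add (Q : Polynomial ℚ) :
    ∃ P : Polynomial ℚ, ∀ x, P.eval (x + 1) = P.eval x + Q.eval x := by
  induction Q using Polynomial.induction_on' with
  | add Q₁ Q₂ ih₁ ih₂ =>
    obtain ⟨P₁, hP₁⟩ := ih₁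
    obtain ⟨P₂, hP₂⟩ := ih₂
    refine ⟨P₁ + P₂, fun x => ?_⟩
    simp only [Polynomial.eval_add, hP₁, hP₂]
    ring
  | monomial n a =>
    refine ⟨Polynomial.C (a / (n + 1)) * Polynomial.bernoulli (n + 1), fun x => ?_⟩
    simp only [Polynomial.eval_mul, Polynomial.eval_C, add_comm x, Polynomial.eval_monomial,
      Polynomial.bernoulli_eval_one_add, Nat.add_sub_cancel, Nat.cast_add, Nat.cast_one]
    field

namespace IsEventuallyPolynomial

variable {h h₁ h₂ : ℕ → ℕ}

protected lemma add (H₁ : IsEventuallyPolynomial h₁) (H₂ : IsEventuallyPolynomial h₂) :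
    IsEventuallyPolynomial fun m => h₁ m + h₂ m := by
  obtain ⟨P₁, hP₁⟩ := H₁
  obtain ⟨P₂, hP₂⟩ := H₂
  refine ⟨P₁ + P₂, ?_⟩
  filter_upwards [hP₁, hP₂] with m hm₁ hm₂
  rw [Polynomial.eval_add, Nat.cast_add, hm₁, hm₂]

lemma comp_succ_iff : IsEventuallyPolynomial (fun m => h (m + 1)) ↔ IsEventuallyPolynomial h := by
  constructor
  · rintro ⟨P, hP⟩
    refine ⟨P.comp (Polynomial.X - 1), ?_⟩
    rw [← Filter.map_add_atTop_eq_nat 1, Filter.eventually_map]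
    filter_upwards [hP] with m hm
    simpa using hm
  · rintro ⟨P, hP⟩
    refine ⟨P.comp (Polynomial.X + 1), ?_⟩
    rw [← Filter.map_add_atTop_eq_nat 1, Filter.eventually_map] at hP
    filter_upwards [hP] with m hm
    simpa using hm

lemma of_succ_eq_add (H₁ : IsEventuallyPolynomial h₁) (hh : ∀ m, h (m + 1) = h m + h₁ m) :
    IsEventuallyPolynomial h := by
  obtain ⟨Q, hQ⟩ := H₁
  obtain ⟨P, hP⟩ := exists_eval_add_one_eq_eval_add Q
  obtain ⟨N, hN⟩ := Filter.eventually_atTop.1 hQ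
  refine ⟨P + Polynomial.C (h N - P.eval (N : ℚ)), Filter.eventually_atTop.2 ⟨N, fun m hm => ?_⟩⟩
  induction m, hm using Nat.le_induction with
  | base => simp
  | succ m hm ih =>
    rw [hh, Nat.cast_add, ih, hN m hm, Nat.cast_succ]
    simp only [Polynomial.eval_add, Polynomial.eval_C, hP]
    ring

end IsEventuallyPolynomial

end EventuallyPolynomial

section Finrank

variable {k V W U : Type*} [Field k] [AddCommGroup V] [Module k V] [AddCommGroup W] [Module k W]
  [AddCommGroup U] [Module k U]

lemma finrank_map_add_finrank_inf_ker (p : Submodule k V) [FiniteDimensional k p]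
    (φ : V →ₗ[k] W) :
    Module.finrank k (p.map φ) + Module.finrank k (p ⊓ LinearMap.ker φ : Submodule k V) =
      Module.finrank k p := by
  have h := LinearMap.finrank_range_add_finrank_ker (φ.domRestrict p)
  rwa [LinearMap.range_domRestrict, LinearMap.ker_domRestrict,
    ← Submodule.finrank_map_subtype_eq, Submodule.map_comap_subtype] at h

lemma finrank_map_le_finrank_map_of_inf_ker_le (p : Submodule k V) [FiniteDimensional k p]
    {φ : V →ₗ[k] W} {ψ : V →ₗ[k] U} (h : ∀ x ∈ p, ψ x = 0 → φ x = 0) :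
    Module.finrank k (p.map φ) ≤ Module.finrank k (p.map ψ) := by
  have hφ := finrank_map_add_finrank_inf_ker p φ
  have hψ := finrank_map_add_finrank_inf_ker p ψ
  have : FiniteDimensional k (p ⊓ LinearMap.ker φ : Submodule k V) :=
    Submodule.finiteDimensional_of_le inf_le_left
  have hker : Module.finrank k (p ⊓ LinearMap.ker ψ : Submodule k V) ≤
      Module.finrank k (p ⊓ LinearMap.ker φ : Submodule k V) :=
    Submodule.finrank_mono fun x hx => ⟨hx.1, h x hx.1 hx.2⟩
  omega

end Finrank

section HilbertSerre

variable {k : Type*} [Field k] {n : ℕ} {I : Ideal (MvPolynomial (Fin (n + 1)) k)}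

instance finiteDimensional_homogeneousSubmodule {σ : Type*} [Finite σ] (m : ℕ) :
    FiniteDimensional k (homogeneousSubmodule σ k m) :=
  Module.Finite.iff_fg.2 (homogeneousSubmodule_fg σ k m)

lemma homogeneousComponent_succ_X_mul {R σ : Type*} [CommSemiring R] (j : σ)
    (G : MvPolynomial σ R) (m : ℕ) :
    homogeneousComponent (m + 1) (X j * G) = X j * homogeneousComponent m G := by
  classical
  ext α
  rw [coeff_homogeneousComponent, coeff_X_mul', coeff_X_mul', coeff_homogeneousComponent]
  by_cases hj : j ∈ α.support
  · have hα : Finsupp.single j 1 ≤ α := by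
      simpa [Nat.one_le_iff_ne_zero] using hj
    have hdeg : α.degree = (α - Finsupp.single j 1).degree + 1 := by
      conv_lhs => rw [← tsub_add_cancel_of_le hα, map_add, Finsupp.degree_single]
    simp only [hj, if_true, hdeg, Nat.add_right_cancel_iff]
  · simp [hj]

attribute [local instance] MvPolynomial.gradedAlgebra in
lemma isHomogeneousIdeal_iff :
    IsHomogeneousIdeal I ↔ I.IsHomogeneous (homogeneousSubmodule (Fin (n + 1)) k) := by
  refine ⟨fun h m f hf => ?_, fun h f hf m => homogeneousComponent_mem_of_mem h hf m⟩
  have hm := h f hf m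
  rwa [← decomposition.decompose'_apply] at hm

lemma isHomogeneousIdeal_span {s : Set (MvPolynomial (Fin (n + 1)) k)}
    (hs : ∀ F ∈ s, ∃ m, F.IsHomogeneous m) : IsHomogeneousIdeal (Ideal.span s) := by
  let := MvPolynomial.gradedAlgebra (σ := Fin (n + 1)) (R := k)
  exact isHomogeneousIdeal_iff.2 (Ideal.homogeneous_span _ _ hs)

lemma IsHomogeneousIdeal.sup_span_X (hI : IsHomogeneousIdeal I) (j : Fin (n + 1)) :
    IsHomogeneousIdeal (I ⊔ Ideal.span {X j}) := by
  let := MvPolynomial.gradedAlgebra (σ := Fin (n + 1)) (R := k)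
  have hX : IsHomogeneousIdeal (Ideal.span {(X j : MvPolynomial (Fin (n + 1)) k)}) :=
    isHomogeneousIdeal_span (by rintro _ rfl; exact ⟨1, isHomogeneous_X k j⟩)
  exact isHomogeneousIdeal_iff.2
    ((isHomogeneousIdeal_iff.1 hI).sup (isHomogeneousIdeal_iff.1 hX))

lemma mem_colon_X_iff {j : Fin (n + 1)} {G : MvPolynomial (Fin (n + 1)) k} :
    G ∈ I.colon {X j} ↔ X j * G ∈ I := by
  rw [Submodule.mem_colon_singleton, smul_eq_mul, mul_comm]

lemma IsHomogeneousIdeal.colon_X (hI : IsHomogeneousIdeal I) (j : Fin (n + 1)) :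
    IsHomogeneousIdeal (I.colon {X j}) := by
  intro G hG m
  rw [mem_colon_X_iff] at hG ⊢
  rw [← homogeneousComponent_succ_X_mul]
  exact hI _ hG (m + 1)

lemma map_mk_inf_ker_factor_eq (hI : IsHomogeneousIdeal I) (j : Fin (n + 1)) (m : ℕ) :
    (homogeneousSubmodule (Fin (n + 1)) k (m + 1)).map (Ideal.Quotient.mkₐ k I).toLinearMap ⊓
        LinearMap.ker (Ideal.Quotient.factorₐ k
          (le_sup_left : I ≤ I ⊔ Ideal.span {X j})).toLinearMap =
      (homogeneousSubmodule (Fin (n + 1)) k m).map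
        ((Ideal.Quotient.mkₐ k I).toLinearMap.comp (LinearMap.mulLeft k (X j))) := by
  apply le_antisymm
  · rintro _ ⟨⟨F, hF, rfl⟩, hker⟩
    obtain ⟨a, ha, b, hb, hab⟩ := Submodule.mem_sup.1 (Ideal.Quotient.eq_zero_iff_mem.1 hker)
    obtain ⟨G, rfl⟩ := Ideal.mem_span_singleton.1 hb
    refine ⟨homogeneousComponent m G, homogeneousComponent_mem _ _, ?_⟩
    have hcomponent := congrArg (homogeneousComponent (m + 1)) hab
    rw [map_add, homogeneousComponent_succ_X_mul, homogeneousComponent_eq_self hF] at hcomponent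
    refine Ideal.Quotient.eq.2 ?_
    rw [← hcomponent, LinearMap.mulLeft_apply, sub_add_cancel_right]
    exact neg_mem (hI a ha (m + 1))
  · rintro _ ⟨G, hG, rfl⟩
    refine ⟨⟨X j * G, ?_, rfl⟩, ?_⟩
    · rw [SetLike.mem_coe, mem_homogeneousSubmodule, Nat.add_comm m 1]
      exact (isHomogeneous_X k j).mul hG
    · exact Ideal.Quotient.eq_zero_iff_mem.2 (Ideal.mul_mem_right _ _
        (Submodule.mem_sup_right (Ideal.mem_span_singleton_self _)))

/-- Additivity of the Hilbert function along `0 → (R/(I : xⱼ))(-1) → R/I → R/(I + xⱼ) → 0`. -/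
lemma hilbF_succ_eq_add (hI : IsHomogeneousIdeal I) (j : Fin (n + 1)) (m : ℕ) :
    hilbF k I (m + 1) =
      hilbF k (I.colon {X j}) m + hilbF k (I ⊔ Ideal.span {X j}) (m + 1) := by
  have hsum := finrank_map_add_finrank_inf_ker
    ((homogeneousSubmodule (Fin (n + 1)) k (m + 1)).map (Ideal.Quotient.mkₐ k I).toLinearMap)
    (Ideal.Quotient.factorₐ k (le_sup_left : I ≤ I ⊔ Ideal.span {X j})).toLinearMap
  have hcolon (G : MvPolynomial (Fin (n + 1)) k) :
      (Ideal.Quotient.mkₐ k I).toLinearMap.comp (LinearMap.mulLeft k (X j)) G = 0 ↔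
        (Ideal.Quotient.mkₐ k (I.colon {X j})).toLinearMap G = 0 :=
    Ideal.Quotient.eq_zero_iff_mem.trans
      (mem_colon_X_iff.symm.trans Ideal.Quotient.eq_zero_iff_mem.symm)
  rw [map_mk_inf_ker_factor_eq hI, ← Submodule.map_comp, add_comm] at hsum
  refine hsum.symm.trans (congrArg₂ _ (le_antisymm ?_ ?_) rfl)
  · exact finrank_map_le_finrank_map_of_inf_ker_le _ fun G _ => (hcolon G).2
  · exact finrank_map_le_finrank_map_of_inf_ker_le _ fun G _ => (hcolon G).1

lemma hilbF_eq_zero_of_forall_X_mem (hI : ∀ j, X j ∈ I) {m : ℕ} (hm : m ≠ 0) :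
    hilbF k I m = 0 := by
  have hbot : (homogeneousSubmodule (Fin (n + 1)) k m).map
      (Ideal.Quotient.mkₐ k I).toLinearMap = ⊥ := by
    rw [Submodule.eq_bot_iff]
    rintro _ ⟨F, hF, rfl⟩
    refine Ideal.Quotient.eq_zero_iff_mem.2 ?_
    rw [F.as_sum]
    refine Ideal.sum_mem _ fun α hα => ?_
    have hα0 : α ≠ 0 := by
      rintro rfl
      exact hm ((hF (mem_support_iff.1 hα)).symm.trans (map_zero _))
    obtain ⟨i, hi⟩ := Finsupp.ne_iff.1 hα0
    exact Ideal.mem_of_dvd _ (X_dvd_monomial.2 (Or.inr hi)) (hI i)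
  rw [hilbF, hbot, finrank_bot]

theorem IsHomogeneousIdeal.isEventuallyPolynomial_hilbF (hI : IsHomogeneousIdeal I) :
    IsEventuallyPolynomial (hilbF k I) := by
  induction I using IsNoetherian.induction with | hgt I ih =>
  by_cases hX : ∀ j, X j ∈ I
  · refine ⟨0, ?_⟩
    filter_upwards [Filter.eventually_ne_atTop 0] with m hm
    simp [hilbF_eq_zero_of_forall_X_mem hX hm]
  push Not at hX
  obtain ⟨j, hj⟩ := hX
  have hsup : IsEventuallyPolynomial fun m => hilbF k (I ⊔ Ideal.span {X j}) (m + 1) := by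
    refine IsEventuallyPolynomial.comp_succ_iff.2 (ih _ ?_ (hI.sup_span_X j))
    exact left_lt_sup.2 fun h => hj (h (Ideal.mem_span_singleton_self _))
  rcases (Ideal.le_colon : I ≤ I.colon {X j}).eq_or_lt with heq | hlt
  · refine hsup.of_succ_eq_add fun m => ?_
    rw [hilbF_succ_eq_add hI j, ← heq]
  · refine IsEventuallyPolynomial.comp_succ_iff.1 ?_
    simpa only [hilbF_succ_eq_add hI j] using (ih _ hlt (hI.colon_X j)).add hsup

lemma IsHomogeneousIdeal.eventually_hilbF_eq_eval_hilbP (hI : IsHomogeneousIdeal I) :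
    ∀ᶠ m : ℕ in Filter.atTop, (hilbF k I m : ℚ) = (hilbP k I).eval (m : ℚ) := by
  have hpoly := hI.isEventuallyPolynomial_hilbF
  unfold IsEventuallyPolynomial at hpoly
  rw [hilbP, dif_pos hpoly]
  exact hpoly.choose_spec

end HilbertSerre

section PolynomialGrowth

variable {P Q : Polynomial ℚ} {r : ℕ}

lemma leadingCoeff_nonneg_of_eventually
    (h : ∀ᶠ m : ℕ in Filter.atTop, 0 ≤ P.eval (m : ℚ)) : 0 ≤ P.leadingCoeff := by
  by_contra! hneg
  rcases lt_or_ge 0 P.degree with hdeg | hdeg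
  · have hlim := (P.tendsto_atBot_of_leadingCoeff_nonpos hdeg hneg.le).comp
      (tendsto_natCast_atTop_atTop (R := ℚ))
    obtain ⟨m, hnonneg, hlt⟩ := (h.and (hlim.eventually (Filter.eventually_lt_atBot 0))).exists
    exact hnonneg.not_gt hlt
  · obtain ⟨m, hm⟩ := h.exists
    rw [Polynomial.eq_C_of_degree_le_zero hdeg] at hneg hm
    rw [Polynomial.leadingCoeff_C] at hneg
    rw [Polynomial.eval_C] at hm
    exact hm.not_gt hneg

lemma coeff_le_coeff_of_eventually_le (hP : P.natDegree ≤ r) (hQ : Q.natDegree ≤ r)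
    (h : ∀ᶠ m : ℕ in Filter.atTop, P.eval (m : ℚ) ≤ Q.eval (m : ℚ)) : P.coeff r ≤ Q.coeff r := by
  have hlead : 0 ≤ (Q - P).leadingCoeff := by
    refine leadingCoeff_nonneg_of_eventually ?_
    filter_upwards [h] with m hm
    rwa [Polynomial.eval_sub, sub_nonneg]
  have hdeg : (Q - P).natDegree ≤ r := (Polynomial.natDegree_sub_le _ _).trans (max_le hQ hP)
  rw [← sub_nonneg, ← Polynomial.coeff_sub]
  rcases hdeg.eq_or_lt with heq | hlt
  · rwa [← heq]
  · exact (Polynomial.coeff_eq_zero_of_natDegree_lt hlt).ge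

lemma natDegree_le_natDegree_of_eventually_le
    (h0 : ∀ᶠ m : ℕ in Filter.atTop, 0 ≤ P.eval (m : ℚ))
    (h : ∀ᶠ m : ℕ in Filter.atTop, P.eval (m : ℚ) ≤ Q.eval (m : ℚ)) :
    P.natDegree ≤ Q.natDegree := by
  by_contra! hlt
  have hcoeff := coeff_le_coeff_of_eventually_le le_rfl hlt.le h
  rw [Polynomial.coeff_eq_zero_of_natDegree_lt hlt] at hcoeff
  have hP : P.leadingCoeff = 0 := hcoeff.antisymm (leadingCoeff_nonneg_of_eventually h0)
  rw [Polynomial.leadingCoeff_eq_zero.1 hP, Polynomial.natDegree_zero] at hlt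
  exact hlt.not_ge (Nat.zero_le _)

lemma le_factorial_mul_leadingCoeff_of_eventually {N : ℕ} (hN : N ≠ 0) {a b c : ℚ}
    (h0 : ∀ᶠ m : ℕ in Filter.atTop, 0 ≤ P.eval (m : ℚ))
    (hlow : ∀ᶠ m : ℕ in Filter.atTop, (N : ℚ) * (m + a) ^ r ≤ r.factorial * P.eval (m : ℚ))
    (hup : ∀ᶠ m : ℕ in Filter.atTop, P.eval (m : ℚ) ≤ c * (m + b) ^ r) :
    (N : ℚ) ≤ P.natDegree.factorial * P.leadingCoeff := by
  have hpow (c x : ℚ) :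
      (Polynomial.C c * (Polynomial.X + Polynomial.C x) ^ r).natDegree ≤ r :=
    (Polynomial.natDegree_C_mul_le _ _).trans (Polynomial.natDegree_pow_X_add_C r x).le
  have hdeg : P.natDegree ≤ r := (natDegree_le_natDegree_of_eventually_le h0
    (by simpa using hup)).trans (hpow c b)
  have hcoeff := coeff_le_coeff_of_eventually_le (hpow N a)
    ((Polynomial.natDegree_C_mul_le (r.factorial : ℚ) P).trans hdeg) (by simpa using hlow)
  rw [Polynomial.coeff_C_mul, Polynomial.coeff_C_mul, Polynomial.coeff_X_add_C_pow, Nat.sub_self,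
    pow_zero, Nat.choose_self, Nat.cast_one, mul_one, mul_one] at hcoeff
  have hne : P.coeff r ≠ 0 := by
    intro hzero
    rw [hzero, mul_zero] at hcoeff
    exact hN (by exact_mod_cast hcoeff.antisymm (Nat.cast_nonneg N))
  have hr : P.natDegree = r := hdeg.antisymm (Polynomial.le_natDegree_of_ne_zero hne)
  rwa [Polynomial.leadingCoeff, hr]

end PolynomialGrowth

section CountMonomials

/-- Homogenization of exponents: the missing degree becomes the exponent of a new variable. -/
noncomputable def degreeLEEquivFinsuppAntidiag (r M : ℕ) :
    {α : Fin r →₀ ℕ // (α.sum fun _ e => e) ≤ M} ≃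
      Finset.finsuppAntidiag (Finset.univ : Finset (Fin (r + 1))) M where
  toFun α := ⟨Finsupp.cons (M - α.1.sum fun _ e => e) α.1, by
    have hα := α.2
    simp only [Finset.mem_finsuppAntidiag, Fin.sum_univ_succ, Finsupp.cons_zero,
      Finsupp.cons_succ, Finset.subset_univ, and_true]
    rw [Finsupp.sum_fintype _ _ fun _ => rfl] at hα ⊢
    omega⟩
  invFun β := ⟨Finsupp.tail β.1, by
    have hβ := (Finset.mem_finsuppAntidiag.1 β.2).1
    rw [Fin.sum_univ_succ] at hβ
    rw [Finsupp.sum_fintype _ _ fun _ => rfl]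
    simp only [Finsupp.tail_apply]
    omega⟩
  left_inv α := Subtype.ext (Finsupp.tail_cons _ _)
  right_inv β := by
    have hβ := (Finset.mem_finsuppAntidiag.1 β.2).1
    rw [Fin.sum_univ_succ] at hβ
    refine Subtype.ext ?_
    change Finsupp.cons (M - (Finsupp.tail β.1).sum fun _ e => e) (Finsupp.tail β.1) = β.1
    conv_rhs => rw [← Finsupp.cons_tail β.1]
    congr 1
    rw [Finsupp.sum_fintype _ _ fun _ => rfl]
    simp only [Finsupp.tail_apply]
    omega

lemma finrank_restrictTotalDegree (k : Type*) [Field k] (r M : ℕ) :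
    Module.finrank k (restrictTotalDegree (Fin r) k M) = (M + r).choose r := by
  refine (Module.finrank_eq_nat_card_basis (basisRestrictSupport k _)).trans ?_
  refine (Nat.card_congr (degreeLEEquivFinsuppAntidiag r M)).trans ?_
  rw [Nat.card_eq_fintype_card, Fintype.card_coe, Finset.card_finsuppAntidiag_nat_eq_choose,
    Finset.card_univ, Fintype.card_fin, ← Nat.choose_symm_add]
  congr 1
  omega

lemma pow_le_factorial_mul_finrank_restrictTotalDegree (k : Type*) [Field k] (r M : ℕ) :
    (M + 1) ^ r ≤ r.factorial * Module.finrank k (restrictTotalDegree (Fin r) k M) := by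
  rw [finrank_restrictTotalDegree, ← Nat.descFactorial_eq_factorial_mul_choose]
  simpa [Nat.add_right_comm M r 1] using Nat.pow_sub_le_descFactorial (M + r) r

end CountMonomials

section AffineHilbertFunction

variable {k : Type*} [Field k] {n m : ℕ} {J : Ideal (MvPolynomial (Fin n) k)}

/-- Dehomogenization `x₀ ↦ 1`. -/
noncomputable def dehomogenize (k : Type*) [Field k] (n : ℕ) :
    MvPolynomial (Fin (n + 1)) k →ₐ[k] MvPolynomial (Fin n) k :=
  aeval (Fin.cases 1 X : Fin (n + 1) → MvPolynomial (Fin n) k)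

lemma totalDegree_dehomogenize_le (F : MvPolynomial (Fin (n + 1)) k) :
    (dehomogenize k n F).totalDegree ≤ F.totalDegree := by
  refine totalDegree_aeval_le (fun j => ?_) F
  cases j using Fin.cases <;> simp

lemma dehomogenize_rename_succ (p : MvPolynomial (Fin n) k) :
    dehomogenize k n (rename Fin.succ p) = p := by
  rw [dehomogenize, aeval_rename]
  exact aeval_X_left_apply p

lemma exists_isHomogeneous_dehomogenize_eq {p : MvPolynomial (Fin n) k} (hp : p.totalDegree ≤ m) :
    ∃ F : MvPolynomial (Fin (n + 1)) k, F.IsHomogeneous m ∧ dehomogenize k n F = p := by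
  refine ⟨∑ α ∈ p.support, X 0 ^ (m - α.degree) * rename Fin.succ (monomial α (p.coeff α)),
    IsHomogeneous.sum _ _ _ fun α hα => ?_, ?_⟩
  · have hα_deg : α.degree ≤ m := (le_totalDegree hα).trans hp
    have hmonomial : (monomial α (p.coeff α)).IsHomogeneous α.degree :=
      isHomogeneous_monomial _ rfl
    have h := ((isHomogeneous_X k (0 : Fin (n + 1))).pow (m - α.degree)).mul
      (hmonomial.rename_isHomogeneous (f := Fin.succ))
    rwa [one_mul, Nat.sub_add_cancel hα_deg] at h
  · conv_rhs => rw [p.as_sum]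
    have hX : dehomogenize k n (X 0) = 1 := by simp [dehomogenize]
    simp only [map_sum, map_mul, map_pow, hX, one_pow, one_mul, dehomogenize_rename_succ]

lemma map_dehomogenize_homogeneousSubmodule (m : ℕ) :
    (homogeneousSubmodule (Fin (n + 1)) k m).map (dehomogenize k n).toLinearMap =
      restrictTotalDegree (Fin n) k m := by
  ext p
  rw [mem_restrictTotalDegree]
  constructor
  · rintro ⟨F, hF, rfl⟩
    exact (totalDegree_dehomogenize_le F).trans (IsHomogeneous.totalDegree_le hF)
  · exact exists_isHomogeneous_dehomogenize_eq

lemma mem_homogIdeal_iff_of_isHomogeneous {F : MvPolynomial (Fin (n + 1)) k}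
    (hF : F.IsHomogeneous m) : F ∈ homogIdeal k J ↔ dehomogenize k n F ∈ J := by
  refine ⟨fun h => ?_, fun h => Ideal.subset_span ⟨⟨m, hF⟩, h⟩⟩
  have hle : homogIdeal k J ≤ J.comap (dehomogenize k n) := Ideal.span_le.2 fun _ hG => hG.2
  exact hle h

lemma hilbF_homogIdeal (m : ℕ) : hilbF k (homogIdeal k J) m =
    Module.finrank k ((restrictTotalDegree (Fin n) k m).map
      (Ideal.Quotient.mkₐ k J).toLinearMap) := by
  rw [hilbF, ← map_dehomogenize_homogeneousSubmodule, ← Submodule.map_comp]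
  have hker (F) (hF : F ∈ homogeneousSubmodule (Fin (n + 1)) k m) :
      (Ideal.Quotient.mkₐ k (homogIdeal k J)).toLinearMap F = 0 ↔
        ((Ideal.Quotient.mkₐ k J).toLinearMap ∘ₗ (dehomogenize k n).toLinearMap) F = 0 :=
    Ideal.Quotient.eq_zero_iff_mem.trans
      ((mem_homogIdeal_iff_of_isHomogeneous hF).trans Ideal.Quotient.eq_zero_iff_mem.symm)
  apply le_antisymm
  · exact finrank_map_le_finrank_map_of_inf_ker_le _ fun F hF => (hker F hF).2
  · exact finrank_map_le_finrank_map_of_inf_ker_le _ fun F hF => (hker F hF).1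

lemma isHomogeneousIdeal_homogIdeal (J : Ideal (MvPolynomial (Fin n) k)) :
    IsHomogeneousIdeal (homogIdeal k J) :=
  isHomogeneousIdeal_span fun _ hF => hF.1

end AffineHilbertFunction

section SeparatingForm

lemma sum_C_mul_X_ne_zero {R σ : Type*} [CommRing R] [Fintype σ] {v : σ → R} (hv : v ≠ 0) :
    ∑ l, C (v l) * X l ≠ 0 := by
  classical
  intro h
  refine hv (funext fun l => ?_)
  simpa [Pi.single_apply] using congrArg (eval (Pi.single l 1)) h

lemma exists_linear_injOn_aeval {k Ω σ : Type*} [Field k] [Infinite k] [Field Ω] [Algebra k Ω]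
    [Finite σ] (Z : Finset (σ → Ω)) :
    ∃ u : MvPolynomial σ k, u.totalDegree ≤ 1 ∧ Set.InjOn (fun ξ : σ → Ω => aeval ξ u) Z := by
  classical
  have := Fintype.ofFinite σ
  let p : MvPolynomial σ Ω := ∏ z ∈ Z.offDiag, ∑ l, C ((z.1 - z.2) l) * X l
  have hp : p ≠ 0 := Finset.prod_ne_zero_iff.2 fun z hz =>
    sum_C_mul_X_ne_zero (sub_ne_zero.2 (Finset.mem_offDiag.1 hz).2.2)
  obtain ⟨c, hc⟩ : ∃ c : σ → k, eval (fun l => algebraMap k Ω (c l)) p ≠ 0 := by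
    by_contra! hzero
    refine hp (funext_set (fun _ => Set.range (algebraMap k Ω))
      (fun _ => Set.infinite_range_of_injective (algebraMap k Ω).injective) fun x hx => ?_)
    choose c hc using fun l => hx l (Set.mem_univ l)
    rw [← _root_.funext hc, hzero, map_zero]
  refine ⟨∑ l, C (c l) * X l, ?_, fun ξ hξ η hη h => ?_⟩
  · refine totalDegree_finsetSum_le fun l _ => (totalDegree_mul _ _).trans ?_
    simp
  · by_contra hne
    refine hc ?_
    rw [map_prod]
    refine Finset.prod_eq_zero (Finset.mem_offDiag.2 ⟨hξ, hη, hne⟩ : (ξ, η) ∈ Z.offDiag) ?_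
    simp only [map_sum, map_mul, aeval_C, aeval_X] at h
    simp only [map_sum, map_mul, eval_C, eval_X, Pi.sub_apply, sub_mul, Finset.sum_sub_distrib]
    rw [sub_eq_zero]
    simpa only [mul_comm] using h

end SeparatingForm

namespace FiniteGenericFibre

variable {k : Type*} [Field k] {n r : ℕ} {J : Ideal (MvPolynomial (Fin n) k)}
  {Ω : Type*} [Field Ω] [Algebra k Ω] [Algebra (MvPolynomial (Fin r) k) Ω]
  (S : FiniteGenericFibre J r Ω)

lemma card_pts_pos (hJ : J ≠ ⊤) : 0 < S.pts.card := by
  refine Finset.card_pos.2 (Finset.nonempty_iff_ne_empty.2 fun hempty => ?_)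
  refine hJ ((Ideal.eq_top_iff_one _).2 (S.mem_of_forall_aeval_eq_zero 1 ?_))
  simp [hempty]

lemma mem_of_forall_sum_aeval_mul_pow_eq_zero {u : MvPolynomial (Fin n) k}
    (hinj : Set.InjOn (fun ξ : Fin n → Ω => aeval ξ u) S.pts) {f : MvPolynomial (Fin n) k}
    (hf : ∀ i : Fin S.pts.card, ∑ ξ ∈ S.pts, aeval ξ (f * u ^ (i : ℕ)) = 0) : f ∈ J := by
  let e := S.pts.equivFin.symm
  have hzero : (fun j => aeval (e j).1 f) = 0 := by
    refine Matrix.eq_zero_of_forall_pow_sum_mul_pow_eq_zero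
      (f := fun j => aeval (e j).1 u) (fun i j h => ?_) fun i => ?_
    · exact e.injective (Subtype.ext (hinj (e i).2 (e j).2 h))
    · have h := hf i
      rw [← Finset.sum_coe_sort, ← e.sum_comp] at h
      simpa only [map_mul, map_pow] using h
  refine S.mem_of_forall_aeval_eq_zero f fun ξ hξ => ?_
  simpa using congrFun hzero (e.symm ⟨ξ, hξ⟩)

variable [IsScalarTower k (MvPolynomial (Fin r) k) Ω]

/-- Vandermonde: at the points of the fibre the sum is a polynomial of degree `< card S.pts` in
the value of `u`, with coefficients independent of the point. -/
lemma eq_zero_of_sum_aeval_lin_mul_pow_mem {u : MvPolynomial (Fin n) k}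
    (hinj : Set.InjOn (fun ξ : Fin n → Ω => aeval ξ u) S.pts)
    {b : Fin S.pts.card → MvPolynomial (Fin r) k}
    (hb : ∑ i, aeval S.lin (b i) * u ^ (i : ℕ) ∈ J) : b = 0 := by
  let e := S.pts.equivFin.symm
  have hzero : (fun i => algebraMap (MvPolynomial (Fin r) k) Ω (b i)) = 0 := by
    refine Matrix.eq_zero_of_forall_index_sum_mul_pow_eq_zero
      (f := fun j => aeval (e j).1 u) (fun i j h => ?_) fun j => ?_
    · exact e.injective (Subtype.ext (hinj (e i).2 (e j).2 h))
    · have h := S.mem_iff_forall_aeval_eq_zero.1 hb (e j).1 (e j).2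
      simpa only [map_sum, map_mul, map_pow, S.aeval_aeval_lin (e j).2] using h
  funext i
  exact S.injective ((congrFun hzero i).trans (map_zero _).symm)

lemma card_mul_finrank_restrictTotalDegree_le [Infinite k] (M : ℕ) :
    S.pts.card * Module.finrank k (restrictTotalDegree (Fin r) k M) ≤
      hilbF k (homogIdeal k J) (M + S.pts.card) := by
  obtain ⟨u, hu, hinj⟩ := exists_linear_injOn_aeval (k := k) S.pts
  let powerSum : (Fin S.pts.card → restrictTotalDegree (Fin r) k M) →ₗ[k] MvPolynomial (Fin n) k :=
    ∑ i : Fin S.pts.card, LinearMap.mulRight k (u ^ (i : ℕ)) ∘ₗ (aeval S.lin).toLinearMap ∘ₗ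
      Submodule.subtype _ ∘ₗ LinearMap.proj i
  have powerSum_apply (b) : powerSum b = ∑ i, aeval S.lin (b i).1 * u ^ (i : ℕ) := by
    simp [powerSum]
  have hdeg (b) : (powerSum b).totalDegree ≤ M + S.pts.card := by
    rw [powerSum_apply]
    refine totalDegree_finsetSum_le fun i _ => (totalDegree_mul _ _).trans (add_le_add ?_ ?_)
    · exact (totalDegree_aeval_le (fun j => totalDegree_le_one_of_mem_span_X (S.lin_mem_span j))
        _).trans ((mem_restrictTotalDegree _ _ _).1 (b i).2)
    · refine (totalDegree_pow _ _).trans ?_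
      grw [hu, mul_one, i.2]
  have hmem (b) : Ideal.Quotient.mk J (powerSum b) ∈ (restrictTotalDegree (Fin n) k
      (M + S.pts.card)).map (Ideal.Quotient.mkₐ k J).toLinearMap :=
    ⟨_, (mem_restrictTotalDegree _ _ _).2 (hdeg b), rfl⟩
  have hfinrank := Module.finrank_pi_fintype k
    (M := fun _ : Fin S.pts.card => restrictTotalDegree (Fin r) k M)
  rw [Fin.sum_const, smul_eq_mul] at hfinrank
  rw [hilbF_homogIdeal, ← hfinrank]
  refine LinearMap.finrank_le_finrank_of_injective
    (f := ((Ideal.Quotient.mkₐ k J).toLinearMap ∘ₗ powerSum).codRestrict _ hmem) ?_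
  rw [injective_iff_map_eq_zero]
  intro b hb
  have hbJ : powerSum b ∈ J := Ideal.Quotient.eq_zero_iff_mem.1 (congrArg Subtype.val hb)
  rw [powerSum_apply] at hbJ
  exact funext fun i => Subtype.ext (congrFun (S.eq_zero_of_sum_aeval_lin_mul_pow_mem hinj hbJ) i)

lemma exists_algebraMap_eq_sum_aeval (f : MvPolynomial (Fin n) k) :
    ∃ c : MvPolynomial (Fin r) k, c.totalDegree ≤ f.totalDegree ∧
      algebraMap _ Ω c = ∑ ξ ∈ S.pts, aeval ξ f := by
  obtain ⟨c, hc⟩ := S.descent _ (.sum _ fun ξ hξ => S.isIntegral_aeval hξ f)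
    fun σ => S.algEquiv_sum_aeval σ f
  refine ⟨c, IsIntegralOfDegree.totalDegree_le_of_injective S.injective ?_, hc⟩
  rw [hc]
  exact .sum fun ξ hξ => S.isIntegralOfDegree_aeval hξ f

lemma hilbF_homogIdeal_le [Infinite k] (m : ℕ) :
    hilbF k (homogIdeal k J) m ≤
      S.pts.card * Module.finrank k (restrictTotalDegree (Fin r) k (m + S.pts.card)) := by
  obtain ⟨u, hu, hinj⟩ := exists_linear_injOn_aeval (k := k) S.pts
  let coeffs : (Fin S.pts.card → restrictTotalDegree (Fin r) k (m + S.pts.card)) →ₗ[k]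
      Fin S.pts.card → Ω := LinearMap.compLeft
    ((IsScalarTower.toAlgHom k (MvPolynomial (Fin r) k) Ω).toLinearMap ∘ₗ Submodule.subtype _) _
  let traces : MvPolynomial (Fin n) k →ₗ[k] Fin S.pts.card → Ω := LinearMap.pi fun i =>
    (∑ ξ ∈ S.pts, (aeval ξ).toLinearMap) ∘ₗ LinearMap.mulRight k (u ^ (i : ℕ))
  have traces_apply (f i) : traces f i = ∑ ξ ∈ S.pts, aeval ξ (f * u ^ (i : ℕ)) := by
    simp [traces]
  have hrange : (restrictTotalDegree (Fin n) k m).map traces ≤ LinearMap.range coeffs := by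
    rintro _ ⟨f, hf, rfl⟩
    choose c hcdeg hc using fun i : Fin S.pts.card =>
      S.exists_algebraMap_eq_sum_aeval (f * u ^ (i : ℕ))
    have hcmem (i) : c i ∈ restrictTotalDegree (Fin r) k (m + S.pts.card) := by
      rw [mem_restrictTotalDegree]
      grw [hcdeg, totalDegree_mul, totalDegree_pow, hu, (mem_restrictTotalDegree _ _ _).1 hf,
        mul_one, i.2]
    refine ⟨fun i => ⟨c i, hcmem i⟩, funext fun i => ?_⟩
    rw [traces_apply, ← hc]
    rfl
  calc hilbF k (homogIdeal k J) m
      ≤ Module.finrank k ((restrictTotalDegree (Fin n) k m).map traces) := by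
        rw [hilbF_homogIdeal]
        refine finrank_map_le_finrank_map_of_inf_ker_le _ fun f _ hf => ?_
        refine Ideal.Quotient.eq_zero_iff_mem.2 (S.mem_of_forall_sum_aeval_mul_pow_eq_zero hinj ?_)
        exact fun i => (traces_apply f i).symm.trans (congrFun hf i)
    _ ≤ Module.finrank k (LinearMap.range coeffs) := Submodule.finrank_mono hrange
    _ ≤ _ := LinearMap.finrank_range_le coeffs
    _ = _ := by rw [Module.finrank_pi_fintype, Fin.sum_const, smul_eq_mul]

theorem card_pts_le_idealDeg [Infinite k] (hJ : J ≠ ⊤) :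
    S.pts.card ≤ idealDeg k (homogIdeal k J) := by
  have hP := (isHomogeneousIdeal_homogIdeal J).eventually_hilbF_eq_eval_hilbP
  refine Nat.le_floor (le_factorial_mul_leadingCoeff_of_eventually (r := r)
    (a := 1 - S.pts.card) (b := S.pts.card + r) (c := S.pts.card) (S.card_pts_pos hJ).ne' ?_ ?_ ?_)
  · filter_upwards [hP] with m hm
    rw [← hm]
    positivity
  · filter_upwards [hP, Filter.eventually_ge_atTop S.pts.card] with m hm hge
    obtain ⟨M, rfl⟩ := Nat.exists_eq_add_of_le' hge
    have hlow : S.pts.card * (M + 1) ^ r ≤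
        r.factorial * hilbF k (homogIdeal k J) (M + S.pts.card) := by
      grw [pow_le_factorial_mul_finrank_restrictTotalDegree k r M,
        ← S.card_mul_finrank_restrictTotalDegree_le M, mul_left_comm]
    rw [← hm, Nat.cast_add, add_add_sub_cancel]
    exact_mod_cast hlow
  · filter_upwards [hP] with m hm
    have hup : hilbF k (homogIdeal k J) m ≤ S.pts.card * (m + S.pts.card + r) ^ r := by
      grw [S.hilbF_homogIdeal_le m, finrank_restrictTotalDegree, Nat.choose_le_pow]
    rw [← hm, ← add_assoc]
    exact_mod_cast hup

end FiniteGenericFibre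

section ChangeOfGenerators

variable {σ k : Type*} [CommRing k] {s t d : ℕ}

lemma totalDegree_le_of_mem_span_range {f : Fin s → MvPolynomial σ k}
    (hf : ∀ i, (f i).totalDegree ≤ d) {p : MvPolynomial σ k}
    (hp : p ∈ Submodule.span k (Set.range f)) : p.totalDegree ≤ d := by
  have hle : Submodule.span k (Set.range f) ≤ restrictTotalDegree σ k d :=
    Submodule.span_le.2 <| Set.range_subset_iff.2 fun i => (mem_restrictTotalDegree _ _ _).2 (hf i)
  exact (mem_restrictTotalDegree _ _ _).1 (hle hp)

lemma exists_sum_mul_eq_of_mem_span_range {f : Fin s → MvPolynomial σ k}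
    {q b : Fin t → MvPolynomial σ k} (hq : ∀ i, q i ∈ Submodule.span k (Set.range f))
    {D : ℕ} (hb : ∀ i, (b i).totalDegree ≤ D) :
    ∃ a : Fin s → MvPolynomial σ k, ∑ i, b i * q i = ∑ j, a j * f j ∧
      ∀ j, (a j).totalDegree ≤ D := by
  choose c hc using fun i => (Submodule.mem_span_range_iff_exists_fun k).1 (hq i)
  refine ⟨fun j => ∑ i, c i j • b i, ?_, fun j =>
    totalDegree_finsetSum_le fun i _ => (totalDegree_smul_le _ _).trans (hb i)⟩
  simp only [← hc, Finset.mul_sum, Finset.sum_mul, mul_smul_comm, smul_mul_assoc]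
  exact Finset.sum_comm

lemma exists_sum_eq_totalDegree_le_of_lt_two (hs : s < 2) {f : Fin s → MvPolynomial σ k}
    {g : MvPolynomial σ k} (hg : g ∈ Ideal.span (Set.range f)) :
    ∃ a : Fin s → MvPolynomial σ k, g = ∑ i, a i * f i ∧
      ∀ i, (a i * f i).totalDegree ≤ g.totalDegree := by
  obtain ⟨a, ha⟩ := Ideal.mem_span_range_iff_exists_fun.1 hg
  refine ⟨a, ha.symm, fun i => ?_⟩
  obtain rfl : s = 1 := by
    have := i.pos
    omega
  rw [← ha, Fin.sum_univ_one, Subsingleton.elim i 0]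

lemma exists_sub_mul_mem_prefixIdeal_zero [IsDomain k] {q : Fin t → MvPolynomial σ k} (ht : 0 < t)
    {g : MvPolynomial σ k} (hg : g ∈ prefixIdeal q 1) :
    ∃ b, g - b * q ⟨0, ht⟩ ∈ prefixIdeal q 0 ∧ b.totalDegree ≤ g.totalDegree := by
  obtain ⟨b, h, hh, hgh⟩ := (mem_prefixIdeal_succ ht).1 hg
  obtain rfl : h = 0 := by simpa [prefixIdeal] using hh
  rcases eq_or_ne g 0 with rfl | hg0
  · exact ⟨0, by simp, by simp⟩
  · exact ⟨b, by simp [hgh],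
      totalDegree_le_of_dvd_of_isDomain (Dvd.intro _ (by simpa using hgh.symm)) hg0⟩

lemma exists_sum_eq_totalDegree_le_of_division {q : Fin t → MvPolynomial σ k} {D : ℕ}
    (hqd : ∀ i, (q i).totalDegree ≤ d)
    (hdiv : ∀ (m : Fin t), ∀ g ∈ prefixIdeal q (m + 1), ∃ b, g - b * q m ∈ prefixIdeal q m ∧
      b.totalDegree + d ≤ g.totalDegree + D * (m + 1))
    {i : ℕ} (hi : i ≤ t) {g : MvPolynomial σ k} (hg : g ∈ prefixIdeal q i) :
    ∃ b : Fin i → MvPolynomial σ k, g = ∑ j, b j * q (Fin.castLE hi j) ∧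
      ∀ j, (b j).totalDegree + d ≤ g.totalDegree + D * i ^ 2 := by
  induction i generalizing g with
  | zero => exact ⟨0, by simpa [prefixIdeal] using hg, nofun⟩
  | succ m ih =>
    obtain ⟨b, hrem, hb⟩ := hdiv ⟨m, hi⟩ g hg
    obtain ⟨c, hsum, hc⟩ := ih (by omega) hrem
    have hremdeg : (g - b * q ⟨m, hi⟩).totalDegree ≤ g.totalDegree + D * (m + 1) := by
      refine (totalDegree_sub _ _).trans (max_le (by omega) ((totalDegree_mul _ _).trans ?_))
      have := hqd ⟨m, hi⟩
      lia
    refine ⟨Fin.snoc c b, ?_, Fin.lastCases ?_ fun j => ?_⟩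
    · rw [Fin.sum_univ_castSucc]
      simp only [Fin.snoc_castSucc, Fin.snoc_last]
      exact sub_eq_iff_eq_add.1 hsum
    · rw [Fin.snoc_last]
      lia
    · rw [Fin.snoc_castSucc]
      have := hc j
      lia

end ChangeOfGenerators

section RegularSequenceDivision

variable {k : Type*} [Field k] {n t m d δ : ℕ} {q : Fin t → MvPolynomial (Fin n) k}

lemma le_add_of_ringKrullDim_quotient_eq {e : ℕ} (hq : Ideal.span (Set.range q) ≠ ⊤)
    (hdim : ringKrullDim (MvPolynomial (Fin n) k ⧸ Ideal.span (Set.range q)) = (e : ℕ)) :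
    n ≤ e + t := by
  have hle := le_ringKrullDim_quotient_add_spanFinrank hq
  grw [hdim, spanFinrank_span_range_le] at hle
  exact_mod_cast hle

variable [CharZero k]

lemma IsPrefixRegular.exists_finiteGenericFibre (hq : IsPrefixRegular q) (hm : m ≤ t)
    (hne : prefixIdeal q m ≠ ⊤) (hrad : (prefixIdeal q m).IsRadical) :
    ∃ r : ℕ, m + r = n ∧ Nonempty (FiniteGenericFibre (prefixIdeal q m) r
      (AlgebraicClosure (FractionRing (MvPolynomial (Fin r) k)))) := by
  refine _root_.exists_finiteGenericFibre hne ?_ ?_ hrad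
  · rw [prefixIdeal_eq_span_range_castLE q hm]
    exact spanFinrank_span_range_le _
  · simpa [MvPolynomial.ringKrullDim_of_isNoetherianRing] using
      hq.ringKrullDim_quotient_add_le hm

lemma IsPrefixRegular.idealDeg_homogIdeal_pos (hq : IsPrefixRegular q) (hm : m ≤ t)
    (hne : prefixIdeal q m ≠ ⊤) (hrad : (prefixIdeal q m).IsRadical) :
    0 < idealDeg k (homogIdeal k (prefixIdeal q m)) := by
  obtain ⟨r, -, ⟨S⟩⟩ := hq.exists_finiteGenericFibre hm hne hrad
  exact (S.card_pts_pos hne).trans_le (S.card_pts_le_idealDeg hne)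

lemma IsPrefixRegular.exists_sub_mul_mem_totalDegree_le (hq : IsPrefixRegular q) (hm : m < t)
    (hne : prefixIdeal q m ≠ ⊤) (hrad : (prefixIdeal q m).IsRadical)
    (hqd : ∀ i, (q i).totalDegree ≤ d) {g : MvPolynomial (Fin n) k}
    (hg : g ∈ prefixIdeal q (m + 1)) :
    ∃ b, g - b * q ⟨m, hm⟩ ∈ prefixIdeal q m ∧ b.totalDegree + d ≤
      g.totalDegree + idealDeg k (homogIdeal k (prefixIdeal q m)) * d * (m + 1) := by
  obtain ⟨r, hmr, ⟨S⟩⟩ := hq.exists_finiteGenericFibre hm.le hne hrad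
  have hpos := S.card_pts_pos hne
  have hcard := S.card_pts_le_idealDeg hne
  obtain ⟨a, h, hh, hgh⟩ := (mem_prefixIdeal_succ hm).1 hg
  have hnzd : ∀ a, q ⟨m, hm⟩ * a ∈ prefixIdeal q m → a ∈ prefixIdeal q m := hq ⟨m, hm⟩
  have hspan := prefixIdeal_eq_span_range_castLE q hm.le
  generalize prefixIdeal q m = J at *
  subst hspan
  obtain ⟨b, hba, hb⟩ := S.exists_sub_mem_totalDegree_le_of_span_range hmr (fun _ => hqd _)
    (hqd _) hnzd (g := g) (a := a) (by rwa [hgh, add_sub_cancel_left])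
  refine ⟨b, ?_, ?_⟩
  · have hrem : g - b * q ⟨m, hm⟩ = h - q ⟨m, hm⟩ * (b - a) := by
      rw [hgh]
      ring
    exact hrem ▸ sub_mem hh (Ideal.mul_mem_left _ _ hba)
  · grw [← hcard]
    obtain ⟨c, hc⟩ := Nat.exists_eq_add_of_le' hpos
    rw [hc] at hb ⊢
    grw [hb]
    simp only [Nat.add_sub_cancel]
    lia

lemma IsPrefixRegular.exists_sum_eq_totalDegree_le (hq : IsPrefixRegular q)
    (hne : Ideal.span (Set.range q) ≠ ⊤) (hqd : ∀ i, (q i).totalDegree ≤ d) (hδpos : 0 < δ)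
    (hrad : ∀ m, 1 ≤ m → m < t → (prefixIdeal q m).IsRadical)
    (hδ : ∀ m, 1 ≤ m → m < t → idealDeg k (homogIdeal k (prefixIdeal q m)) ≤ δ)
    {g : MvPolynomial (Fin n) k} (hg : g ∈ Ideal.span (Set.range q)) :
    ∃ b : Fin t → MvPolynomial (Fin n) k, g = ∑ i, b i * q i ∧
      ∀ i, (b i).totalDegree + d ≤ g.totalDegree + δ * d * t ^ 2 := by
  refine exists_sum_eq_totalDegree_le_of_division hqd ?_ le_rfl (by rwa [prefixIdeal_self])
  rintro ⟨m, hm⟩ g hg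
  rcases m.eq_zero_or_pos with rfl | hmpos
  · obtain ⟨b, hrem, hb⟩ := exists_sub_mul_mem_prefixIdeal_zero hm hg
    exact ⟨b, hrem, add_le_add hb (by simpa using Nat.le_mul_of_pos_left d hδpos)⟩
  · obtain ⟨b, hrem, hb⟩ := hq.exists_sub_mul_mem_totalDegree_le hm
      (ne_top_of_le_ne_top hne (prefixIdeal_le_span_range q m)) (hrad m hmpos hm) hqd hg
    exact ⟨b, hrem, hb.trans (by grw [hδ m hmpos hm])⟩

end RegularSequenceDivision

theorem representation_complete_intersection_general {k : Type*} [Field k] [CharZero k]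
    {n s : ℕ} (hs : s ≤ n) (f : Fin s → MvPolynomial (Fin n) k)
    (hproper : Ideal.span (Set.range f) ≠ ⊤)
    (hdim : ringKrullDim (MvPolynomial (Fin n) k ⧸ Ideal.span (Set.range f)) =
      ((n - s : ℕ) : WithBot (WithTop ℕ)))
    (d δ : ℕ) (hd : ∀ i, (f i).totalDegree ≤ d)
    (t : ℕ) (ht : t ≤ s) (q : Fin t → MvPolynomial (Fin n) k)
    (hqlin : ∀ i, q i ∈ Submodule.span k (Set.range f))
    (hqspan : Ideal.span (Set.range q) = Ideal.span (Set.range f))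
    (hqreg : RingTheory.Sequence.IsWeaklyRegular (MvPolynomial (Fin n) k) (List.ofFn q))
    (hqrad : ∀ i : ℕ, 1 ≤ i → i ≤ t - 1 → (Ideal.span (q '' {j | (j : ℕ) < i})).IsRadical)
    (hδ : ∀ i : ℕ, 1 ≤ i → i ≤ min t n - 1 →
      idealDeg k (homogIdeal k (Ideal.span (q '' {j | (j : ℕ) < i}))) ≤ δ)
    (g : MvPolynomial (Fin n) k) (hg : g ∈ Ideal.span (Set.range f)) :
    ∃ a : Fin s → MvPolynomial (Fin n) k, g = ∑ i, a i * f i ∧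
      ∀ i, (a i * f i).totalDegree ≤ g.totalDegree + s ^ 2 * d * δ := by
  rw [← hqspan] at hproper hdim
  obtain rfl : t = s := by
    have := le_add_of_ringKrullDim_quotient_eq hproper hdim
    omega
  rcases lt_or_ge t 2 with ht2 | ht2
  · obtain ⟨a, ha, hdeg⟩ := exists_sum_eq_totalDegree_le_of_lt_two ht2 hg
    exact ⟨a, ha, fun i => (hdeg i).trans (Nat.le_add_right _ _)⟩
  have hq := isPrefixRegular_of_isWeaklyRegular hqreg
  have hrad : ∀ m, 1 ≤ m → m < t → (prefixIdeal q m).IsRadical := fun m h1 hm =>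
    hqrad m h1 (by omega)
  have hdeg : ∀ m, 1 ≤ m → m < t → idealDeg k (homogIdeal k (prefixIdeal q m)) ≤ δ :=
    fun m h1 hm => hδ m h1 (by omega)
  have hδpos : 0 < δ := (hq.idealDeg_homogIdeal_pos (by omega)
    (ne_top_of_le_ne_top hproper (prefixIdeal_le_span_range q 1)) (hrad 1 le_rfl ht2)).trans_le
      (hdeg 1 le_rfl ht2)
  obtain ⟨b, rfl, hb⟩ := hq.exists_sum_eq_totalDegree_le hproper
    (fun i => totalDegree_le_of_mem_span_range hd (hqlin i)) hδpos hrad hdeg (hqspan ▸ hg)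
  obtain ⟨a, ha, hadeg⟩ := exists_sum_mul_eq_of_mem_span_range hqlin
    fun i => Nat.le_sub_of_add_le (hb i)
  refine ⟨a, ha, fun i => (totalDegree_mul _ _).trans ?_⟩
  have hle : d ≤ δ * d * t ^ 2 :=
    (Nat.le_mul_of_pos_left d hδpos).trans (Nat.le_mul_of_pos_right _ (by positivity))
  grw [hadeg i, hd i, Nat.sub_add_cancel (hle.trans (Nat.le_add_left _ _))]
  exact le_of_eq (by ring)

/-- the representation problem in complete intersections.  Given
`f₁,…,f_s` defining a proper ideal of Krull dimension `n − s`, `d` a bound for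
their degrees, and any admissible system `q₁,…,q_t` of `k`-linear combinations
of the `fᵢ` (generating the same ideal, forming a weak regular sequence, with
radical intermediate ideals) whose intermediate affine varieties have degrees
bounded by `δ` — so that the geometric degree of the system is at most `δ` —
every `g ∈ (f₁,…,f_s)` can be written `g = ∑ aᵢ fᵢ` with
`deg (aᵢ fᵢ) ≤ deg g + s²·(d + 3n)·δ`. -/
theorem representation_complete_intersection {k : Type*} [Field k] [IsAlgClosed k]
    [CharZero k] {n s : ℕ} (hs : s ≤ n)
    (f : Fin s → MvPolynomial (Fin n) k)
    (hproper : Ideal.span (Set.range f) ≠ ⊤)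
    (hdim : ringKrullDim (MvPolynomial (Fin n) k ⧸ Ideal.span (Set.range f)) =
      ((n - s : ℕ) : WithBot (WithTop ℕ)))
    (d δ : ℕ) (hd : ∀ i, (f i).totalDegree ≤ d)
    (t : ℕ) (ht : t ≤ s) (q : Fin t → MvPolynomial (Fin n) k)
    (hqlin : ∀ i, q i ∈ Submodule.span k (Set.range f))
    (hqspan : Ideal.span (Set.range q) = Ideal.span (Set.range f))
    (hqreg : RingTheory.Sequence.IsWeaklyRegular (MvPolynomial (Fin n) k)
      (List.ofFn q))
    (hqrad : ∀ i : ℕ, 1 ≤ i → i ≤ t - 1 →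
      (Ideal.span (q '' {j | (j : ℕ) < i})).IsRadical)
    (hδ : ∀ i : ℕ, 1 ≤ i → i ≤ min t n - 1 →
      idealDeg k (homogIdeal k (Ideal.span (q '' {j | (j : ℕ) < i}))) ≤ δ)
    (g : MvPolynomial (Fin n) k) (hg : g ∈ Ideal.span (Set.range f)) :
    ∃ a : Fin s → MvPolynomial (Fin n) k, g = ∑ i, a i * f i ∧
      ∀ i, (a i * f i).totalDegree ≤ g.totalDegree + s ^ 2 * (d + 3 * n) * δ := by
  obtain ⟨a, ha, hdeg⟩ := representation_complete_intersection_general hs f hproper hdim d δ hd t ht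
    q hqlin hqspan hqreg hqrad hδ g hg
  exact ⟨a, ha, fun i => (hdeg i).trans (by gcongr; exact Nat.le_add_right _ _)⟩
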